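/- Let d ≥ 2 and k ≥ 1 be integers and θ ∈ (0,1). There exists a constant C = C(θ, k, d) such that for all x ∈ 𝕊^k with x + e₁₁ ∈ 𝕊^k and all t ≥ 0, Σ_{z ∈ 𝕊^k} |p_t^ℓ(x,z) − p_t^ℓ(x + e₁₁, z)| ≤ C (√t + 1)^{−θ}. -/

import Mathlib

open scoped Classical

noncomputable section

namespace SSEPPaper

/-- Configurations of `k` labelled particles on `ℤ^d`. -/
abbrev Conf (d k : ℕ) := Fin k → Fin d → ℤ

/-- Euclidean norm of an integer vector in `ℤ^d`. -/
def vnorm {d : ℕ} (v : Fin d → ℤ) : ℝ := Real.sqrt (∑ j, ((v j : ℝ)) ^ 2)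

/-- Euclidean norm on `(ℝ^d)^k` of an integer configuration. -/
def cnorm {d k : ℕ} (x : Conf d k) : ℝ := Real.sqrt (∑ i, ∑ j, ((x i j : ℝ)) ^ 2)

/-- The set `𝕊^k` of configurations with pairwise distinct particle positions. -/
def SSet (d k : ℕ) : Set (Conf d k) := {x | ∀ i j : Fin k, i ≠ j → x i ≠ x j}

/-- Swap of the coordinates `i` and `j` of a configuration, i.e. `σ^{i,j}x`. -/
def cswap {d k : ℕ} (i j : Fin k) (x : Conf d k) : Conf d k := x ∘ Equiv.swap i j

/-- `δ^{i,j}w`: the configuration which agrees with `w` except that its `j`-th coordinate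
is replaced by `w i`. -/
def cdelta {d k : ℕ} (i j : Fin k) (w : Conf d k) : Conf d k := Function.update w j (w i)

/-- Kronecker delta function at `y`. -/
def deltaFn {α : Type*} (y : α) : α → ℝ := fun x => if x = y then 1 else 0

/-- Generator of the labelled exclusion process, extended to all of `(ℤ^d)^k`. -/
def Lexc {d k : ℕ} (f : Conf d k → ℝ) : Conf d k → ℝ := fun x =>
  (∑' y : Conf d k, if cnorm (y - x) = 1 ∧ y ∈ SSet d k then f y - f x else 0) +
    ∑ i : Fin k, ∑ j : Fin k,
      if i < j ∧ vnorm (x i - x j) = 1 ∧ x ∈ SSet d k then f (cswap i j x) - f x else 0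

/-- Generator of `k` independent simple random walks on `ℤ^d`. -/
def Lrw {d k : ℕ} (f : Conf d k → ℝ) : Conf d k → ℝ := fun x =>
  ∑' z : Conf d k, if cnorm (z - x) = 1 then f z - f x else 0

/-- Generator (discrete Laplacian) of a single simple random walk on `ℤ^d`. -/
def Lap {d : ℕ} (f : (Fin d → ℤ) → ℝ) : (Fin d → ℤ) → ℝ := fun x =>
  ∑' y : Fin d → ℤ, if vnorm (y - x) = 1 then f y - f x else 0

/-- Transition probabilities `p_t^ℓ(x,y) = (e^{tL^ℓ} δ_y)(x)` of the labelled exclusion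
process, given by the exponential power series of the generator. -/
def ptl {d k : ℕ} (t : ℝ) (x y : Conf d k) : ℝ :=
  ∑' n : ℕ, t ^ n / n.factorial * ((Lexc (d := d) (k := k))^[n] (deltaFn y)) x

/-- Transition probabilities `p_t^{rw}(x,y) = (e^{tL^{rw}} δ_y)(x)` of `k` independent
simple random walks on `ℤ^d`. -/
def ptrw {d k : ℕ} (t : ℝ) (x y : Conf d k) : ℝ :=
  ∑' n : ℕ, t ^ n / n.factorial * ((Lrw (d := d) (k := k))^[n] (deltaFn y)) x

/-- Transition probabilities `p_t(x,y) = (e^{tΔ} δ_y)(x)` of a single continuous-time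
simple random walk on `ℤ^d`. -/
def pt1 {d : ℕ} (t : ℝ) (x y : Fin d → ℤ) : ℝ :=
  ∑' n : ℕ, t ^ n / n.factorial * ((Lap (d := d))^[n] (deltaFn y)) x

/-- The configuration `e₁₁ = ((1,0,…,0),(0,…,0),…,(0,…,0))`. -/
def e11 (d k : ℕ) : Conf d k := fun i j => if i.val = 0 ∧ j.val = 0 then 1 else 0


/-! ### Directions, transpositions and the label form of the generator -/

/-- Unit vectors. -/
def ev {d : ℕ} (e : Fin d × Bool) : Fin d → ℤ := Pi.single e.1 (if e.2 then 1 else -1)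

/-- Opposite direction. -/
def eneg {d : ℕ} : (Fin d × Bool) ≃ (Fin d × Bool) :=
  Equiv.prodCongr (Equiv.refl _) Equiv.boolNot

lemma ev_eneg {d : ℕ} (e : Fin d × Bool) : ev (eneg e) = - ev e := by
  obtain ⟨j, s⟩ := e
  cases s <;> simp [ev, eneg, Pi.single_neg]

lemma ev_ne_zero {d : ℕ} (e : Fin d × Bool) : ev e ≠ 0 := by
  obtain ⟨j, s⟩ := e
  cases s <;> simp [ev]

lemma ev_inj {d : ℕ} : Function.Injective (ev (d := d)) := by
  rintro ⟨j, s⟩ ⟨j', s'⟩ h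
  have h1 := congrFun h j
  by_cases hj : j = j'
  · subst hj
    cases s <;> cases s' <;> simp [ev] at h1 ⊢
  · cases s <;> cases s' <;> simp [ev, hj] at h1

lemma sum_eneg {d : ℕ} (G : (Fin d → ℤ) → ℝ) : ∑ e : Fin d × Bool, G (- ev e) = ∑ e, G (ev e) := by
  rw [← Equiv.sum_comp eneg (fun e => G (ev e))]
  simp [ev_eneg]

/-- Exchange of the contents of two sites. -/
def tr {d k : ℕ} (p q : Fin d → ℤ) (y : Fin k → Fin d → ℤ) : Fin k → Fin d → ℤ :=
  fun i => Equiv.swap p q (y i)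

/-- Rate weight. -/
def wt {d k : ℕ} (x : Conf d k) (q : Fin d → ℤ) : ℝ := if q ∈ Set.range x then 1 / 2 else 1

/-- Label form of the generator. -/
def Lab {d k : ℕ} (u : Conf d k → ℝ) (x : Conf d k) : ℝ :=
  ∑ i, ∑ e, wt x (x i + ev e) * (u (tr (x i) (x i + ev e) x) - u x)

lemma tr_of_notMem {d k : ℕ} {p q : Fin d → ℤ} {y : Fin k → Fin d → ℤ}
    (hp : p ∉ Set.range y) (hq : q ∉ Set.range y) : tr p q y = y := by
  funext i
  refine Equiv.swap_apply_of_ne_of_ne ?_ ?_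
  · exact fun h => hp ⟨i, h⟩
  · exact fun h => hq ⟨i, h⟩

lemma tr_comm {d k : ℕ} (p q : Fin d → ℤ) (y : Fin k → Fin d → ℤ) : tr p q y = tr q p y := by
  funext i; simp [tr, Equiv.swap_comm]

lemma tr_cons {d k : ℕ} (p q a : Fin d → ℤ) (y : Fin k → Fin d → ℤ) :
    tr p q (Fin.cons a y : Conf d (k+1)) = (Fin.cons (Equiv.swap p q a) (tr p q y) : Conf d (k+1)) := by
  funext i
  refine Fin.cases ?_ (fun j => ?_) i <;> simp [tr]

lemma tr_inj {d k : ℕ} (p q : Fin d → ℤ) {y : Fin k → Fin d → ℤ} (hy : Function.Injective y) :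
    Function.Injective (tr p q y) := fun _ _ h => hy ((Equiv.swap p q).injective h)

lemma mem_SSet {d k : ℕ} (x : Conf d k) : x ∈ SSet d k ↔ Function.Injective x := by
  constructor
  · intro h i j hij
    by_contra hne
    exact h i j hne hij
  · intro h i j hne hij
    exact hne (h hij)

lemma reindex {d k : ℕ} {y : Fin k → Fin d → ℤ} (hy : Function.Injective y) (c : Fin d → ℤ)
    (G : (Fin d → ℤ) → ℝ) :
    ∑ j, ∑ e, (if y j + ev e = c then G (y j) else 0) =
      ∑ e, (if c + ev e ∈ Set.range y then G (c + ev e) else 0) := by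
  rw [← sum_eneg (fun v => if c + v ∈ Set.range y then G (c + v) else 0), Finset.sum_comm]
  refine Finset.sum_congr rfl fun e _ => ?_
  by_cases h : c + - ev e ∈ Set.range y
  · obtain ⟨j0, hj0⟩ := h
    rw [if_pos ⟨j0, hj0⟩, Finset.sum_eq_single j0]
    · rw [if_pos (by rw [hj0]; abel), hj0]
    · intro j _ hj
      rw [if_neg]
      intro h
      apply hj; apply hy
      rw [hj0, ← h]; abel
    · simp
  · rw [if_neg h]
    refine Finset.sum_eq_zero fun j _ => ?_
    rw [if_neg]
    intro h'
    exact h ⟨j, by rw [← h']; abel⟩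

/-! ### The coupled process -/

/-- Coupled states. -/
abbrev St (d k : ℕ) := (Fin d → ℤ) × (Fin d → ℤ) × (Fin k → Fin d → ℤ)

/-- Rates of the moves of the other particles. -/
def w2 {d k : ℕ} (s : St d k) (q : Fin d → ℤ) : ℝ :=
  if q = s.1 ∨ q = s.2.1 then 0 else wt s.2.2 q

/-- Directions in which both discrepancies move together. -/
def Sync {d k : ℕ} (s : St d k) (e : Fin d × Bool) : Prop :=
  s.1 e.1 = s.2.1 e.1 ∧ s.1 + ev e ∉ Set.range s.2.2 ∧ s.2.1 + ev e ∉ Set.range s.2.2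

/-- Index set of the transitions. -/
abbrev Mv (d k : ℕ) := ((Fin d × Bool) ⊕ (Fin d × Bool)) ⊕ (Fin k × (Fin d × Bool))

/-- Rates of the transitions. -/
def rate {d k : ℕ} (s : St d k) : Mv d k → ℝ
  | Sum.inl _ => 1
  | Sum.inr (j, e) => w2 s (s.2.2 j + ev e)

/-- Targets of the transitions. -/
def nxt {d k : ℕ} (s : St d k) : Mv d k → St d k
  | Sum.inl (Sum.inl e) => if Sync s e then (s.1 + ev e, s.2.1 + ev e, s.2.2)
      else (s.1 + ev e, s.2.1, tr s.1 (s.1 + ev e) s.2.2)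
  | Sum.inl (Sum.inr e) => if Sync s e then s
      else (s.1, s.2.1 + ev e, tr s.2.1 (s.2.1 + ev e) s.2.2)
  | Sum.inr (j, e) => (s.1, s.2.1, tr (s.2.2 j) (s.2.2 j + ev e) s.2.2)

/-- Coupled generator. -/
def Lc {d k : ℕ} (F : St d k → ℝ) (s : St d k) : ℝ :=
  ∑ m, rate s m * (F (nxt s m) - F s)

/-- Valid coupled states. -/
def Valid {d k : ℕ} (s : St d k) : Prop :=
  Function.Injective s.2.2 ∧ s.1 ∉ Set.range s.2.2 ∧ s.2.1 ∉ Set.range s.2.2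

lemma half_gen {d k : ℕ} (u : Conf d (k+1) → ℝ) (a b : Fin d → ℤ) (y : Fin k → Fin d → ℤ)
    (hy : Function.Injective y) (ha : a ∉ Set.range y) (hb : b ∉ Set.range y) (hab : a ≠ b) :
    Lab u (Fin.cons a y) =
      (∑ e, (u (Fin.cons (a + ev e) (tr a (a + ev e) y)) - u (Fin.cons a y))) +
      (∑ e, (u (Fin.cons a (tr b (b + ev e) y)) - u (Fin.cons a y))) +
      ∑ j, ∑ e, w2 (a, b, y) (y j + ev e) *
        (u (Fin.cons a (tr (y j) (y j + ev e) y)) - u (Fin.cons a y)) := by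
  set U : ℝ := u (Fin.cons a y) with hU
  have hcell : ∀ j : Fin k, ∀ e : Fin d × Bool,
      wt (Fin.cons a y : Conf d (k+1)) (y j + ev e) *
        (u (tr (y j) (y j + ev e) (Fin.cons a y)) - U) =
      w2 (a, b, y) (y j + ev e) * (u (Fin.cons a (tr (y j) (y j + ev e) y)) - U)
      + (if y j + ev e = a then (1/2 : ℝ) * (u (Fin.cons (y j) (tr (y j) a y)) - U) else 0)
      + (if y j + ev e = b then (u (Fin.cons a (tr (y j) b y)) - U) else 0) := by
    intro j e
    have hja : y j ≠ a := fun h => ha ⟨j, h⟩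
    have hrange : ∀ q, q ∈ Set.range (Fin.cons a y : Conf d (k+1)) ↔ q = a ∨ q ∈ Set.range y := by
      intro q; rw [Fin.range_cons]; simp
    by_cases h1 : y j + ev e = a
    · have h2 : y j + ev e ≠ b := fun h => hab (h1.symm.trans h)
      rw [if_pos h1, if_neg h2, h1, tr_cons, Equiv.swap_apply_right]
      simp [w2, wt]
    · by_cases h2 : y j + ev e = b
      · rw [if_neg h1, if_pos h2, h2, tr_cons, Equiv.swap_apply_of_ne_of_ne hja.symm hab]
        have : b ∉ Set.range (Fin.cons a y : Conf d (k+1)) := by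
          rw [hrange]; push Not; exact ⟨hab.symm, hb⟩
        simp only [w2, wt, if_neg this]
        simp
      · rw [if_neg h1, if_neg h2, tr_cons, Equiv.swap_apply_of_ne_of_ne hja.symm (Ne.symm h1)]
        simp [w2, wt, h1, h2]
  unfold Lab
  rw [Fin.sum_univ_succ]
  simp only [Fin.cons_zero, Fin.cons_succ]
  change (∑ e, wt (Fin.cons a y : Conf d (k+1)) (a + ev e) *
      (u (tr a (a + ev e) (Fin.cons a y)) - U)) +
    ∑ j, ∑ e, wt (Fin.cons a y : Conf d (k+1)) (y j + ev e) *
      (u (tr (y j) (y j + ev e) (Fin.cons a y)) - U) = _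
  rw [Finset.sum_congr rfl (fun j _ => Finset.sum_congr rfl fun e _ => hcell j e)]
  simp only [Finset.sum_add_distrib]
  rw [reindex hy a (fun p => (1/2 : ℝ) * (u (Fin.cons p (tr p a y)) - U)),
    reindex hy b (fun p => u (Fin.cons a (tr p b y)) - U)]
  have h0 : ∀ e : Fin d × Bool, wt (Fin.cons a y : Conf d (k+1)) (a + ev e) *
      (u (tr a (a + ev e) (Fin.cons a y)) - U) +
      (if a + ev e ∈ Set.range y then (1/2 : ℝ) * (u (Fin.cons (a + ev e) (tr (a + ev e) a y)) - U) else 0)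
      = u (Fin.cons (a + ev e) (tr a (a + ev e) y)) - U := by
    intro e
    rw [tr_cons, Equiv.swap_apply_left, tr_comm (a + ev e) a]
    have hr : a + ev e ∈ Set.range (Fin.cons a y : Conf d (k+1)) ↔ a + ev e ∈ Set.range y := by
      rw [Fin.range_cons]; simp only [Set.mem_insert_iff, add_eq_left, ev_ne_zero, false_or]
    by_cases h : a + ev e ∈ Set.range y
    · simp only [wt, hr, h, if_true]; ring
    · simp only [wt, hr, h, if_false]; ring
  have h1 : ∀ e : Fin d × Bool,
      (if b + ev e ∈ Set.range y then (u (Fin.cons a (tr (b + ev e) b y)) - U) else 0)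
      = u (Fin.cons a (tr b (b + ev e) y)) - U := by
    intro e
    rw [tr_comm]
    by_cases h : b + ev e ∈ Set.range y
    · rw [if_pos h]
    · rw [if_neg h, tr_of_notMem hb h, hU]; simp
  rw [← Finset.sum_congr rfl (fun e _ => h0 e), ← Finset.sum_congr rfl (fun e _ => h1 e),
    Finset.sum_add_distrib]
  ring

lemma w2_comm {d k : ℕ} (a b : Fin d → ℤ) (y : Fin k → Fin d → ℤ) (q) :
    w2 (a, b, y) q = w2 (b, a, y) q := by
  simp [w2, or_comm]

/-- expanded form of `Lc` -/
lemma Lc_eq {d k : ℕ} (F : St d k → ℝ) (a b : Fin d → ℤ) (y : Fin k → Fin d → ℤ) :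
    Lc F (a, b, y) = (∑ e, ((F (nxt (a, b, y) (Sum.inl (Sum.inl e))) - F (a, b, y)) +
      (F (nxt (a, b, y) (Sum.inl (Sum.inr e))) - F (a, b, y)))) +
      ∑ j, ∑ e, w2 (a, b, y) (y j + ev e) *
        (F (a, b, tr (y j) (y j + ev e) y) - F (a, b, y)) := by
  unfold Lc
  rw [Fintype.sum_sum_type, Fintype.sum_sum_type, Finset.sum_add_distrib]
  congr 1
  · simp only [rate, one_mul]
  · rw [Fintype.sum_prod_type]
    simp only [rate, nxt]

lemma coupling {d k : ℕ} (u : Conf d (k+1) → ℝ) (a b : Fin d → ℤ) (y : Fin k → Fin d → ℤ)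
    (hv : Valid (a, b, y)) (hab : a ≠ b) :
    Lab u (Fin.cons a y) - Lab u (Fin.cons b y) =
      Lc (fun s => u (Fin.cons s.1 s.2.2) - u (Fin.cons s.2.1 s.2.2)) (a, b, y) := by
  obtain ⟨hy, ha, hb⟩ := hv
  simp only at hy ha hb
  rw [half_gen u a b y hy ha hb hab, half_gen u b a y hy hb ha hab.symm, Lc_eq]
  have h3 : ∀ e : Fin d × Bool,
      (let F : St d k → ℝ := fun s => u (Fin.cons s.1 s.2.2) - u (Fin.cons s.2.1 s.2.2)
       (F (nxt (a, b, y) (Sum.inl (Sum.inl e))) - F (a, b, y)) +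
      (F (nxt (a, b, y) (Sum.inl (Sum.inr e))) - F (a, b, y))) =
      (u (Fin.cons (a + ev e) (tr a (a + ev e) y)) - u (Fin.cons a y)) +
      (u (Fin.cons a (tr b (b + ev e) y)) - u (Fin.cons a y)) -
      ((u (Fin.cons (b + ev e) (tr b (b + ev e) y)) - u (Fin.cons b y)) +
      (u (Fin.cons b (tr a (a + ev e) y)) - u (Fin.cons b y))) := by
    intro e
    by_cases hs : Sync (a, b, y) e
    · have hs' := hs
      obtain ⟨-, h1, h2⟩ := hs'
      simp only at h1 h2
      simp only [nxt, if_pos hs, tr_of_notMem ha h1, tr_of_notMem hb h2]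
      ring
    · simp only [nxt, if_neg hs]
      ring
  simp only at h3
  rw [Finset.sum_congr rfl (fun e _ => h3 e)]
  simp only [Finset.sum_sub_distrib, Finset.sum_add_distrib, w2_comm b a, mul_sub]
  ring

lemma Lc_mono {d k : ℕ} (F G : St d k → ℝ) (s : St d k)
    (h : ∀ m, F (nxt s m) - F s ≤ G (nxt s m) - G s) : Lc F s ≤ Lc G s := by
  refine Finset.sum_le_sum fun m _ => mul_le_mul_of_nonneg_left (h m) ?_
  rcases m with m | ⟨j, e⟩
  · simp [rate]
  · simp only [rate, w2, wt]; split_ifs <;> norm_num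

lemma rate_nonneg {d k : ℕ} (s : St d k) (m) : 0 ≤ rate s m := by
  rcases m with m | ⟨j, e⟩
  · simp [rate]
  · simp only [rate, w2, wt]; split_ifs <;> norm_num

lemma rate_le {d k : ℕ} (s : St d k) (m) : rate s m ≤ 1 := by
  rcases m with m | ⟨j, e⟩
  · simp [rate]
  · simp only [rate, w2, wt]; split_ifs <;> norm_num

lemma Lc_add {d k : ℕ} (F G : St d k → ℝ) (s : St d k) :
    Lc (fun s => F s + G s) s = Lc F s + Lc G s := by
  simp only [Lc, ← Finset.sum_add_distrib]
  refine Finset.sum_congr rfl fun m _ => by ring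

lemma Lc_sub {d k : ℕ} (F G : St d k → ℝ) (s : St d k) :
    Lc (fun s => F s - G s) s = Lc F s - Lc G s := by
  simp only [Lc, ← Finset.sum_sub_distrib]
  refine Finset.sum_congr rfl fun m _ => by ring

lemma Lc_smul {d k : ℕ} (c : ℝ) (F : St d k → ℝ) (s : St d k) :
    Lc (fun s => c * F s) s = c * Lc F s := by
  simp only [Lc, Finset.mul_sum]
  refine Finset.sum_congr rfl fun m _ => by ring

lemma Lc_sum {d k : ℕ} {ι : Type*} (T : Finset ι) (F : ι → St d k → ℝ) (s : St d k) :
    Lc (fun s => ∑ i ∈ T, F i s) s = ∑ i ∈ T, Lc (F i) s := by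
  simp only [Lc, ← Finset.sum_sub_distrib, Finset.mul_sum]
  rw [Finset.sum_comm]

lemma valid_nxt {d k : ℕ} (s : St d k) (hv : Valid s) (hab : s.1 ≠ s.2.1) (m)
    (hm : rate s m ≠ 0) : Valid (nxt s m) := by
  obtain ⟨a, b, y⟩ := s
  obtain ⟨hy, ha, hb⟩ := hv
  simp only at hy ha hb hab
  have hcell : ∀ p q c : Fin d → ℤ, Equiv.swap p q c ∉ Set.range y → c ∉ Set.range (tr p q y) := by
    rintro p q c h ⟨i, hi⟩
    apply h
    refine ⟨i, ?_⟩
    rw [← hi]; simp [tr]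
  rcases m with (e | e) | ⟨j, e⟩
  · by_cases hs : Sync (a, b, y) e
    · simp only [nxt, if_pos hs]
      exact ⟨hy, hs.2⟩
    · simp only [nxt, if_neg hs]
      refine ⟨tr_inj _ _ hy, hcell _ _ _ (by simpa using ha), hcell _ _ _ ?_⟩
      dsimp only
      by_cases h : b = a + ev e
      · rw [← h]; simpa using ha
      · rwa [Equiv.swap_apply_of_ne_of_ne hab.symm h]
  · by_cases hs : Sync (a, b, y) e
    · simp only [nxt, if_pos hs]
      exact ⟨hy, ha, hb⟩
    · simp only [nxt, if_neg hs]
      refine ⟨tr_inj _ _ hy, hcell _ _ _ ?_, hcell _ _ _ (by simpa using hb)⟩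
      dsimp only
      by_cases h : a = b + ev e
      · rw [← h]; simpa using hb
      · rwa [Equiv.swap_apply_of_ne_of_ne hab h]
  · simp only [rate, w2] at hm
    have h : ¬ (y j + ev e = a ∨ y j + ev e = b) := by
      intro h; exact hm (if_pos h)
    push Not at h
    simp only [nxt]
    refine ⟨tr_inj _ _ hy, hcell _ _ _ ?_, hcell _ _ _ ?_⟩ <;> dsimp only
    · rwa [Equiv.swap_apply_of_ne_of_ne (fun h' => ha ⟨j, h'.symm⟩) h.1.symm]
    · rwa [Equiv.swap_apply_of_ne_of_ne (fun h' => hb ⟨j, h'.symm⟩) h.2.symm]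


/-! ### Drift computations -/

lemma Lc_swap {d k : ℕ} (F : St d k → ℝ) (a b : Fin d → ℤ) (y : Fin k → Fin d → ℤ) :
    Lc F (a, b, y) = Lc (fun s => F (s.2.1, s.1, s.2.2)) (b, a, y) := by
  rw [Lc_eq, Lc_eq]
  congr 1
  · refine Finset.sum_congr rfl fun e _ => ?_
    by_cases hs : Sync (a, b, y) e
    · have hs' : Sync (b, a, y) e := ⟨hs.1.symm, hs.2.2, hs.2.1⟩
      simp only [nxt, if_pos hs, if_pos hs']
    · have hs' : ¬ Sync (b, a, y) e := fun h => hs ⟨h.1.symm, h.2.2, h.2.1⟩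
      simp only [nxt, if_neg hs, if_neg hs']
      ring
  · simp only [w2_comm b a]

lemma marginal {d k : ℕ} (g : (Fin d → ℤ) → ℝ) (hg : ∀ z, g (-z) = g z)
    (a b : Fin d → ℤ) (y : Fin k → Fin d → ℤ) (hv : Valid (a, b, y)) (hab : a ≠ b) (i : Fin k) :
    Lc (fun s => g (s.1 - s.2.2 i)) (a, b, y) =
      2 * ∑ e, (if (a - y i) + ev e = 0 then 0 else g (a - y i + ev e) - g (a - y i)) := by
  obtain ⟨hy, ha, hb⟩ := hv
  simp only at hy ha hb
  rw [Lc_eq]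
  set z := a - y i with hz
  have hya : y i ≠ a := fun h => ha ⟨i, h⟩
  have hyb : y i ≠ b := fun h => hb ⟨i, h⟩
  have h1 : ∀ e : Fin d × Bool,
      (g ((nxt (a, b, y) (Sum.inl (Sum.inl e))).1 - (nxt (a, b, y) (Sum.inl (Sum.inl e))).2.2 i) - g z)
      + (g ((nxt (a, b, y) (Sum.inl (Sum.inr e))).1 - (nxt (a, b, y) (Sum.inl (Sum.inr e))).2.2 i) - g z)
      = (if z + ev e = 0 then 0 else g (z + ev e) - g z) +
        (if y i = b + ev e then g (a - b) - g z else 0) := by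
    intro e
    have hz0 : z + ev e = 0 ↔ y i = a + ev e := by
      rw [hz, sub_add_eq_add_sub, sub_eq_zero, eq_comm]
    by_cases hs : Sync (a, b, y) e
    · have h1 : y i ≠ a + ev e := fun h => hs.2.1 ⟨i, h⟩
      have h2 : y i ≠ b + ev e := fun h => hs.2.2 ⟨i, h⟩
      simp only [nxt, if_pos hs]
      rw [if_neg (fun h => h1 (hz0.1 h)), if_neg h2, ← hz, hz, sub_add_eq_add_sub]
      ring
    · simp only [nxt, if_neg hs, tr]
      congr 1
      · by_cases h : y i = a + ev e
        · rw [if_pos (hz0.2 h), h, Equiv.swap_apply_right]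
          have : z = - ev e := by rw [hz, h]; abel
          rw [this, hg]
          simp
        · rw [if_neg (fun h' => h (hz0.1 h')), Equiv.swap_apply_of_ne_of_ne hya h, hz,
            sub_add_eq_add_sub]
      · by_cases h : y i = b + ev e
        · rw [if_pos h, h, Equiv.swap_apply_right]
        · rw [if_neg h, Equiv.swap_apply_of_ne_of_ne hyb h, ← hz]; simp
  have h2 : ∀ (j : Fin k) (e : Fin d × Bool),
      w2 (a, b, y) (y j + ev e) * (g (a - tr (y j) (y j + ev e) y i) - g z) =
      (if j = i then w2 (a, b, y) (y i + ev e) * (g (a - (y i + ev e)) - g z) else 0) +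
      (if y j + ev e = y i then (1/2 : ℝ) * (g (a - y j) - g z) else 0) := by
    intro j e
    by_cases hji : j = i
    · subst hji
      rw [if_pos rfl, if_neg (by simp [ev_ne_zero])]
      simp [tr]
    · have hne : y i ≠ y j := fun h => hji (hy h.symm)
      rw [if_neg hji]
      by_cases h : y j + ev e = y i
      · rw [if_pos h, h]
        simp [tr, w2, wt, hya, hyb]
      · rw [if_neg h]
        simp only [tr]
        rw [Equiv.swap_apply_of_ne_of_ne hne (Ne.symm h), ← hz]; simp
  have h3 : ∑ e : Fin d × Bool, (if y i = b + ev e then g (a - b) - g z else 0) =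
      ∑ e : Fin d × Bool, (if y i + ev e = b then g (a - (y i + ev e)) - g z else 0) := by
    rw [← sum_eneg (fun v => if y i + v = b then g (a - (y i + v)) - g z else 0)]
    refine Finset.sum_congr rfl fun e _ => ?_
    have : y i + - ev e = b ↔ y i = b + ev e := by
      rw [← sub_eq_add_neg, sub_eq_iff_eq_add]
    by_cases h : y i = b + ev e
    · rw [if_pos h, if_pos (this.2 h), this.2 h]
    · rw [if_neg h, if_neg (fun h' => h (this.1 h'))]
  have h4 : ∑ j, ∑ e, (if j = i then w2 (a, b, y) (y i + ev e) * (g (a - (y i + ev e)) - g z) else 0)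
      = ∑ e, w2 (a, b, y) (y i + ev e) * (g (a - (y i + ev e)) - g z) := by
    rw [Finset.sum_comm]
    simp
  simp only [h1, h2, Finset.sum_add_distrib, h3, h4]
  rw [reindex hy (y i) (fun p => (1/2 : ℝ) * (g (a - p) - g z)), two_mul, add_assoc]
  congr 1
  rw [← sum_eneg (fun v => if z + v = 0 then 0 else g (z + v) - g z), ← Finset.sum_add_distrib,
    ← Finset.sum_add_distrib]
  refine Finset.sum_congr rfl fun e _ => ?_
  have hz1 : z + - ev e = a - (y i + ev e) := by rw [hz]; abel
  have hz0 : a - (y i + ev e) = 0 ↔ y i + ev e = a := by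
    rw [sub_eq_zero, eq_comm]
  simp only [hz1, hz0]
  by_cases c1 : y i + ev e = a
  · rw [c1]; simp [w2, ha, hab]
  · by_cases c2 : y i + ev e = b
    · rw [c2]; simp [w2, hb, hab.symm]
    · by_cases c3 : y i + ev e ∈ Set.range y
      · simp only [w2, wt, c1, c2, c3, or_self, if_false, if_true]; ring
      · simp only [w2, wt, c1, c2, c3, or_self, if_false]; ring

/-- Planar quadratic form. -/
def qf {d : ℕ} (i0 i1 : Fin d) (z : Fin d → ℤ) : ℝ := (z i0 : ℝ) ^ 2 + (z i1 : ℝ) ^ 2 + 1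

lemma qf_one_le {d : ℕ} (i0 i1 : Fin d) (z) : 1 ≤ qf i0 i1 z := by
  unfold qf; nlinarith [sq_nonneg (z i0 : ℝ), sq_nonneg (z i1 : ℝ)]

lemma qf_neg {d : ℕ} (i0 i1 : Fin d) (z) : qf i0 i1 (-z) = qf i0 i1 z := by
  simp [qf]

lemma qf_ev_le {d : ℕ} (i0 i1 : Fin d) (h01 : i0 ≠ i1) (e) : qf i0 i1 (ev e) ≤ 2 := by
  obtain ⟨j, s⟩ := e
  unfold qf ev
  by_cases h0 : j = i0
  · subst h0
    cases s <;> simp [Ne.symm h01] <;> norm_num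
  · by_cases h1 : j = i1
    · subst h1
      cases s <;> simp [h01] <;> norm_num
    · simp [Ne.symm h0, Ne.symm h1]

lemma sum_four {d : ℕ} (i0 i1 : Fin d) (h01 : i0 ≠ i1) (G : Fin d × Bool → ℝ)
    (hG : ∀ j s, j ≠ i0 → j ≠ i1 → G (j, s) = 0) :
    ∑ e, G e = G (i0, true) + G (i0, false) + (G (i1, true) + G (i1, false)) := by
  rw [Fintype.sum_prod_type]
  simp only [Fintype.sum_bool]
  rw [← Finset.sum_subset (Finset.subset_univ ({i0, i1} : Finset (Fin d))), Finset.sum_pair h01]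
  intro j _ hj
  simp only [Finset.mem_insert, Finset.mem_singleton, not_or] at hj
  rw [hG j _ hj.1 hj.2, hG j _ hj.1 hj.2, add_zero]

lemma qf_add {d : ℕ} (i0 i1 : Fin d) (h01 : i0 ≠ i1) (z : Fin d → ℤ) :
    qf i0 i1 (z + ev (i0, true)) = qf i0 i1 z + 1 + 2 * z i0 ∧
    qf i0 i1 (z + ev (i0, false)) = qf i0 i1 z + 1 - 2 * z i0 ∧
    qf i0 i1 (z + ev (i1, true)) = qf i0 i1 z + 1 + 2 * z i1 ∧
    qf i0 i1 (z + ev (i1, false)) = qf i0 i1 z + 1 - 2 * z i1 := by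
  unfold qf ev
  simp [h01, h01.symm]
  refine ⟨?_, ?_, ?_, ?_⟩ <;> ring

lemma qf_add_other {d : ℕ} (i0 i1 : Fin d) (z : Fin d → ℤ) (j s)
    (h0 : j ≠ i0) (h1 : j ≠ i1) : qf i0 i1 (z + ev (j, s)) = qf i0 i1 z := by
  unfold qf ev
  simp [Ne.symm h0, Ne.symm h1]

lemma dq {d : ℕ} (i0 i1 : Fin d) (h01 : i0 ≠ i1) (z : Fin d → ℤ) :
    ∑ e, (qf i0 i1 (z + ev e) - qf i0 i1 z) = 4 := by
  rw [sum_four i0 i1 h01 _ (fun j s h0 h1 => by rw [qf_add_other i0 i1 z j s h0 h1, sub_self])]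
  obtain ⟨e1, e2, e3, e4⟩ := qf_add i0 i1 h01 z
  rw [e1, e2, e3, e4]; ring

lemma dlog {d : ℕ} (i0 i1 : Fin d) (h01 : i0 ≠ i1) (z : Fin d → ℤ) :
    0 ≤ ∑ e, (Real.log (qf i0 i1 (z + ev e)) - Real.log (qf i0 i1 z)) ∧
    (qf i0 i1 z ≤ 2 →
      1 / 2 ≤ ∑ e, (Real.log (qf i0 i1 (z + ev e)) - Real.log (qf i0 i1 z))) := by
  rw [sum_four i0 i1 h01 _ (fun j s h0 h1 => by rw [qf_add_other i0 i1 z j s h0 h1, sub_self])]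
  have p1 := qf_one_le i0 i1 (z + ev (i0, true))
  have p2 := qf_one_le i0 i1 (z + ev (i0, false))
  have p3 := qf_one_le i0 i1 (z + ev (i1, true))
  have p4 := qf_one_le i0 i1 (z + ev (i1, false))
  have p0 := qf_one_le i0 i1 z
  obtain ⟨e1, e2, e3, e4⟩ := qf_add i0 i1 h01 z
  have key : Real.log (qf i0 i1 (z + ev (i0, true))) - Real.log (qf i0 i1 z) +
      (Real.log (qf i0 i1 (z + ev (i0, false))) - Real.log (qf i0 i1 z)) +
      (Real.log (qf i0 i1 (z + ev (i1, true))) - Real.log (qf i0 i1 z) +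
      (Real.log (qf i0 i1 (z + ev (i1, false))) - Real.log (qf i0 i1 z))) =
      Real.log ((qf i0 i1 (z + ev (i0, true)) * qf i0 i1 (z + ev (i0, false))) *
        (qf i0 i1 (z + ev (i1, true)) * qf i0 i1 (z + ev (i1, false)))) -
        Real.log (qf i0 i1 z ^ 4) := by
    rw [Real.log_pow, Real.log_mul (by positivity) (by positivity),
      Real.log_mul (by positivity) (by positivity), Real.log_mul (by positivity) (by positivity)]
    push_cast; ring
  rw [key]
  have hs : qf i0 i1 z = (z i0 : ℝ) ^ 2 + (z i1 : ℝ) ^ 2 + 1 := rfl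
  set s := qf i0 i1 z
  have hid : (qf i0 i1 (z + ev (i0, true)) * qf i0 i1 (z + ev (i0, false))) *
        (qf i0 i1 (z + ev (i1, true)) * qf i0 i1 (z + ev (i1, false))) =
        s ^ 4 + (2 * s ^ 2 + 8 * s + 5 + 16 * ((z i0 : ℝ) * z i1) ^ 2) := by
    rw [e1, e2, e3, e4, hs]; ring
  rw [hid]
  have h16 : 0 ≤ 16 * ((z i0 : ℝ) * z i1) ^ 2 := by positivity
  constructor
  · rw [sub_nonneg]
    apply Real.log_le_log (by positivity)
    nlinarith
  · intro hs2
    have h2 : 2 * s ^ 4 ≤ s ^ 4 + (2 * s ^ 2 + 8 * s + 5 + 16 * ((z i0 : ℝ) * z i1) ^ 2) := by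
      have h4 : s ^ 2 ≤ 4 := by nlinarith
      nlinarith [mul_nonneg (sub_nonneg.2 h4) (sq_nonneg s)]
    have h3 := Real.log_le_log (by positivity) h2
    rw [Real.log_mul (by norm_num) (by positivity)] at h3
    have := Real.log_two_gt_d9
    linarith

/-- l1 norm -/
def n1 {d : ℕ} (r : Fin d → ℤ) : ℕ := ∑ j, (r j).natAbs

/-- squared Euclidean norm -/
def nsq {d : ℕ} (r : Fin d → ℤ) : ℝ := ∑ j, (r j : ℝ) ^ 2

lemma n1_add {d : ℕ} (r : Fin d → ℤ) (e : Fin d × Bool) :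
    n1 (r + ev e) + (r e.1).natAbs = n1 r + (r e.1 + if e.2 then 1 else -1).natAbs := by
  unfold n1
  rw [← Finset.add_sum_erase _ _ (Finset.mem_univ e.1), ← Finset.add_sum_erase _ (fun j => (r j).natAbs) (Finset.mem_univ e.1)]
  have : ∑ x ∈ Finset.univ.erase e.1, ((r + ev e) x).natAbs = ∑ x ∈ Finset.univ.erase e.1, (r x).natAbs := by
    refine Finset.sum_congr rfl fun x hx => ?_
    have := (Finset.mem_erase.1 hx).1
    simp [ev, this]
  rw [this]
  simp [ev]
  ring

lemma n1_ge {d : ℕ} (r : Fin d → ℤ) (j) : (r j).natAbs ≤ n1 r :=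
  Finset.single_le_sum (f := fun j => (r j).natAbs) (fun _ _ => Nat.zero_le _) (Finset.mem_univ j)

lemma nsq_add {d : ℕ} (r : Fin d → ℤ) (e : Fin d × Bool) :
    nsq (r + ev e) = nsq r + 2 * (if e.2 then 1 else -1) * r e.1 + 1 := by
  unfold nsq
  rw [← Finset.add_sum_erase _ _ (Finset.mem_univ e.1), ← Finset.add_sum_erase _ (fun j => (r j : ℝ) ^ 2) (Finset.mem_univ e.1)]
  have : ∑ x ∈ Finset.univ.erase e.1, ((((r + ev e) x : ℤ)) : ℝ) ^ 2 = ∑ x ∈ Finset.univ.erase e.1, (r x : ℝ) ^ 2 := by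
    refine Finset.sum_congr rfl fun x hx => ?_
    have := (Finset.mem_erase.1 hx).1
    simp [ev, this]
  rw [this]
  obtain ⟨j, s⟩ := e
  cases s <;> simp [ev] <;> ring

lemma nsq_neg {d : ℕ} (r : Fin d → ℤ) : nsq (-r) = nsq r := by simp [nsq]

lemma nsq_ge {d : ℕ} (r : Fin d → ℤ) : (n1 r : ℝ) ^ 2 ≤ d * nsq r := by
  have := sq_sum_le_card_mul_sum_sq (s := Finset.univ) (f := fun j => |(r j : ℝ)|)
  simp only [sq_abs, Finset.card_univ, Fintype.card_fin] at this
  unfold n1 nsq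
  push_cast
  simpa [Nat.cast_natAbs] using this

lemma Lc_nsq {d k : ℕ} (a b : Fin d → ℤ) (y : Fin k → Fin d → ℤ) :
    Lc (fun s => nsq (s.1 - s.2.1)) (a, b, y) ≤ 4 * d := by
  rw [Lc_eq]
  simp only [sub_self, mul_zero, Finset.sum_const_zero, add_zero]
  have : ∀ e ∈ (Finset.univ : Finset (Fin d × Bool)),
      nsq ((nxt (a, b, y) (Sum.inl (Sum.inl e))).1 - (nxt (a, b, y) (Sum.inl (Sum.inl e))).2.1) -
        nsq (a - b) + (nsq ((nxt (a, b, y) (Sum.inl (Sum.inr e))).1 -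
        (nxt (a, b, y) (Sum.inl (Sum.inr e))).2.1) - nsq (a - b)) ≤ 2 := by
    intro e _
    by_cases hs : Sync (a, b, y) e
    · simp only [nxt, if_pos hs, add_sub_add_right_eq_sub]
      norm_num
    · simp only [nxt, if_neg hs]
      have e1 : a + ev e - b = (a - b) + ev e := by abel
      have e2 : a - (b + ev e) = (a - b) + ev (eneg e) := by rw [ev_eneg]; abel
      rw [e1, e2, nsq_add, nsq_add]
      obtain ⟨j, s⟩ := e
      apply le_of_eq
      cases s <;> simp [eneg] <;> ring
  refine (Finset.sum_le_sum this).trans ?_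
  simp
  linarith

/-- collision indicator -/
def coll {d k : ℕ} (s : St d k) : ℝ :=
  if ∃ e, s.1 + ev e ∈ Set.range s.2.2 ∨ s.2.1 + ev e ∈ Set.range s.2.2 then 1 else 0

lemma Lc_h {d k : ℕ} (h δ : ℕ → ℝ) (hδ : ∀ n, h (n + 1) = h n + δ n) (h0 : ∀ n, 0 ≤ δ n)
    (h1 : ∀ n, δ (n + 1) ≤ δ n) (a b : Fin d → ℤ) (y : Fin k → Fin d → ℤ) (hab : a ≠ b)
    (n : ℕ) (hn : n1 (a - b) = n + 1) :
    Lc (fun s => h (n1 (s.1 - s.2.1))) (a, b, y) ≤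
      2 * (δ (n + 1) - δ n) + 4 * d * δ (n + 1) * coll (a, b, y) := by
  rw [Lc_eq]
  simp only [sub_self, mul_zero, Finset.sum_const_zero, add_zero]
  obtain ⟨j0, hj0⟩ : ∃ j, a j ≠ b j := Function.ne_iff.1 hab
  have hc0 : 0 ≤ coll (a, b, y) := by unfold coll; split_ifs <;> norm_num
  have : ∀ e ∈ (Finset.univ : Finset (Fin d × Bool)),
      h (n1 ((nxt (a, b, y) (Sum.inl (Sum.inl e))).1 - (nxt (a, b, y) (Sum.inl (Sum.inl e))).2.1)) -
        h (n1 (a - b)) + (h (n1 ((nxt (a, b, y) (Sum.inl (Sum.inr e))).1 -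
        (nxt (a, b, y) (Sum.inl (Sum.inr e))).2.1)) - h (n1 (a - b))) ≤
        (if e.1 = j0 then δ (n + 1) - δ n else 0) + 2 * δ (n + 1) * coll (a, b, y) := by
    intro e _
    have hmono := h1 n
    have hcc := mul_nonneg (h0 (n+1)) hc0
    by_cases hs : Sync (a, b, y) e
    · have hne : e.1 ≠ j0 := by
        intro h; exact hj0 (h ▸ hs.1)
      simp only [nxt, if_pos hs, add_sub_add_right_eq_sub, if_neg hne]
      linarith
    · simp only [nxt, if_neg hs]
      have e1 : a + ev e - b = (a - b) + ev e := by abel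
      have e2 : a - (b + ev e) = (a - b) + ev (eneg e) := by rw [ev_eneg]; abel
      rw [e1, e2]
      have k1 := n1_add (a - b) e
      have k2 := n1_add (a - b) (eneg e)
      have kk := n1_ge (a - b) e.1
      rw [hn] at k1 k2 kk
      rw [hn]
      have hsg : (eneg e).1 = e.1 := rfl
      have hsg2 : (eneg e).2 = !e.2 := rfl
      rw [hsg, hsg2] at k2
      by_cases hr : a e.1 = b e.1
      · have hne : e.1 ≠ j0 := by
          intro h; exact hj0 (h ▸ hr)
        have hr0 : (a - b) e.1 = 0 := by simp [hr]
        have hcoll : coll (a, b, y) = 1 := by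
          unfold coll
          rw [if_pos]
          by_contra hcon
          push Not at hcon
          exact hs ⟨hr, (hcon e).1, (hcon e).2⟩
        rw [hr0] at k1 k2
        have m1 : n1 (a - b + ev e) = n + 1 + 1 := by
          cases h : e.2 <;> simp [h] at k1 <;> omega
        have m2 : n1 (a - b + ev (eneg e)) = n + 1 + 1 := by
          cases h : e.2 <;> simp [h] at k2 <;> omega
        rw [m1, m2, if_neg hne, hcoll, hδ (n+1)]
        linarith
      · have hr0 : (a - b) e.1 ≠ 0 := by simpa [sub_eq_zero] using hr
        have hb : (if e.1 = j0 then δ (n + 1) - δ n else 0) ≥ δ (n + 1) - δ n := by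
          split_ifs <;> linarith
        have : (n1 (a - b + ev e) = n + 2 ∧ n1 (a - b + ev (eneg e)) = n) ∨
            (n1 (a - b + ev e) = n ∧ n1 (a - b + ev (eneg e)) = n + 2) := by
          generalize (a - b) e.1 = ρ at *
          cases h : e.2 <;> simp [h] at k1 k2 <;> omega
        rcases this with ⟨m1, m2⟩ | ⟨m1, m2⟩ <;> rw [m1, m2, hδ (n+1), hδ n] <;> linarith
  refine (Finset.sum_le_sum this).trans ?_
  rw [Finset.sum_add_distrib, Fintype.sum_prod_type, Finset.sum_comm]
  simp
  apply le_of_eq; ring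


/-! ### The Lyapunov function -/

/-- Correction attached to the first discrepancy site. -/
def psiA {d k : ℕ} (i0 i1 : Fin d) (i : Fin k) (s : St d k) : ℝ :=
  Real.log (qf i0 i1 (s.1 - s.2.2 i) + nsq (s.1 - s.2.1)) - Real.log (qf i0 i1 (s.1 - s.2.2 i))

/-- Correction attached to the second discrepancy site. -/
def psiB {d k : ℕ} (i0 i1 : Fin d) (i : Fin k) (s : St d k) : ℝ :=
  Real.log (qf i0 i1 (s.2.1 - s.2.2 i) + nsq (s.1 - s.2.1)) - Real.log (qf i0 i1 (s.2.1 - s.2.2 i))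

/-- Adjacency indicator. -/
def adj {d : ℕ} (a c : Fin d → ℤ) : ℝ := if ∃ e, a + ev e = c then 1 else 0

lemma nsq_nonneg {d : ℕ} (r : Fin d → ℤ) : 0 ≤ nsq r := by unfold nsq; positivity

lemma nsq_pos {d : ℕ} {a b : Fin d → ℤ} (hab : a ≠ b) : 0 < nsq (a - b) := by
  obtain ⟨j, hj⟩ := Function.ne_iff.1 hab
  unfold nsq
  refine Finset.sum_pos' (fun _ _ => by positivity) ⟨j, Finset.mem_univ j, ?_⟩
  have : ((a - b) j : ℝ) ≠ 0 := by
    simpa [sub_eq_zero] using hj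
  positivity

lemma n1_pos {d : ℕ} {a b : Fin d → ℤ} (hab : a ≠ b) : 0 < n1 (a - b) := by
  obtain ⟨j, hj⟩ := Function.ne_iff.1 hab
  refine lt_of_lt_of_le ?_ (n1_ge _ j)
  rw [Int.natAbs_pos]
  simpa [sub_eq_zero] using hj

lemma adj_nonneg {d : ℕ} (a c : Fin d → ℤ) : 0 ≤ adj a c := by
  unfold adj; split_ifs <;> norm_num

lemma Lc_psiA {d k : ℕ} (i0 i1 : Fin d) (h01 : i0 ≠ i1) (a b : Fin d → ℤ)
    (y : Fin k → Fin d → ℤ) (hv : Valid (a, b, y)) (hab : a ≠ b) (i : Fin k) :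
    Lc (psiA i0 i1 i) (a, b, y) ≤ (8 + 8 * d) / nsq (a - b) - adj a (y i) := by
  unfold psiA
  rw [Lc_sub]
  have hnsq := nsq_pos hab
  have hq0 := qf_one_le i0 i1 (a - y i)
  have hF0 : 0 < qf i0 i1 (a - y i) + nsq (a - b) := by linarith
  have hA : Lc (fun s : St d k => Real.log (qf i0 i1 (s.1 - s.2.2 i) + nsq (s.1 - s.2.1))) (a, b, y)
      ≤ (8 + 8 * d) / nsq (a - b) := by
    have hqs : Lc (fun s : St d k => qf i0 i1 (s.1 - s.2.2 i)) (a, b, y) ≤ 8 + 4 * d := by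
      rw [marginal (qf i0 i1) (qf_neg i0 i1) a b y hv hab i]
      have : ∀ e ∈ (Finset.univ : Finset (Fin d × Bool)),
          (if (a - y i) + ev e = 0 then 0 else qf i0 i1 (a - y i + ev e) - qf i0 i1 (a - y i)) ≤
          (qf i0 i1 (a - y i + ev e) - qf i0 i1 (a - y i)) + 1 := by
        intro e _
        split_ifs with h
        · have hz : a - y i = - ev e := eq_neg_of_add_eq_zero_left h
          have h1 := qf_ev_le i0 i1 h01 e
          have h2 := qf_one_le i0 i1 (a - y i + ev e)
          rw [hz, qf_neg]
          rw [hz] at h2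
          linarith
        · linarith
      have h2 := Finset.sum_le_sum this
      rw [Finset.sum_add_distrib, dq i0 i1 h01] at h2
      simp at h2
      simp
      linarith
    have hsum : Lc (fun s : St d k => qf i0 i1 (s.1 - s.2.2 i) + nsq (s.1 - s.2.1)) (a, b, y)
        ≤ 8 + 8 * d := by
      rw [Lc_add]
      linarith [Lc_nsq a b y]
    have hm : Lc (fun s : St d k => Real.log (qf i0 i1 (s.1 - s.2.2 i) + nsq (s.1 - s.2.1))) (a, b, y)
      ≤ Lc (fun s : St d k => (qf i0 i1 (a - y i) + nsq (a - b))⁻¹ *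
          (qf i0 i1 (s.1 - s.2.2 i) + nsq (s.1 - s.2.1))) (a, b, y) := by
      apply Lc_mono
      intro m
      generalize nxt (a, b, y) m = s'
      have h1 := qf_one_le i0 i1 (s'.1 - s'.2.2 i)
      have h2 := nsq_nonneg (s'.1 - s'.2.1)
      have hF1 : 0 < qf i0 i1 (s'.1 - s'.2.2 i) + nsq (s'.1 - s'.2.1) := by linarith
      dsimp only
      rw [← Real.log_div hF1.ne' hF0.ne', inv_mul_cancel₀ hF0.ne', ← div_eq_inv_mul]
      exact Real.log_le_sub_one_of_pos (div_pos hF1 hF0)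
    refine hm.trans ?_
    rw [Lc_smul, ← div_eq_inv_mul]
    calc _ ≤ (8 + 8 * d : ℝ) / (qf i0 i1 (a - y i) + nsq (a - b)) := by gcongr
      _ ≤ _ := by
        apply div_le_div_of_nonneg_left (by positivity) hnsq
        linarith
  have hB : adj a (y i) ≤ Lc (fun s : St d k => Real.log (qf i0 i1 (s.1 - s.2.2 i))) (a, b, y) := by
    rw [marginal (fun z => Real.log (qf i0 i1 z)) (fun z => by rw [qf_neg]) a b y hv hab i]
    have : ∀ e ∈ (Finset.univ : Finset (Fin d × Bool)),
        Real.log (qf i0 i1 (a - y i + ev e)) - Real.log (qf i0 i1 (a - y i)) ≤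
        (if (a - y i) + ev e = 0 then 0 else
          Real.log (qf i0 i1 (a - y i + ev e)) - Real.log (qf i0 i1 (a - y i))) := by
      intro e _
      split_ifs with h
      · rw [h]
        have : qf i0 i1 (0 : Fin d → ℤ) = 1 := by simp [qf]
        rw [this, Real.log_one]
        have := Real.log_nonneg hq0
        linarith
      · exact le_rfl
    have h2 := Finset.sum_le_sum this
    obtain ⟨h3, h4⟩ := dlog i0 i1 h01 (a - y i)
    unfold adj
    split_ifs with h
    · obtain ⟨e, he⟩ := h
      have hz : a - y i = - ev e := by rw [← he]; abel
      have := h4 (by rw [hz, qf_neg]; exact qf_ev_le i0 i1 h01 e)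
      linarith
    · linarith
  linarith

lemma Lc_psiB {d k : ℕ} (i0 i1 : Fin d) (h01 : i0 ≠ i1) (a b : Fin d → ℤ)
    (y : Fin k → Fin d → ℤ) (hv : Valid (a, b, y)) (hab : a ≠ b) (i : Fin k) :
    Lc (psiB i0 i1 i) (a, b, y) ≤ (8 + 8 * d) / nsq (a - b) - adj b (y i) := by
  rw [Lc_swap]
  have h := Lc_psiA i0 i1 h01 b a y ⟨hv.1, hv.2.2, hv.2.1⟩ hab.symm i
  have e1 : (fun s : St d k => psiB i0 i1 i (s.2.1, s.1, s.2.2)) = psiA i0 i1 i := by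
    funext s
    simp only [psiA, psiB]
    rw [← neg_sub s.1 s.2.1, nsq_neg]
  rw [e1]
  rwa [← neg_sub a b, nsq_neg] at h

/-- The Lyapunov function. -/
def Phi {d k : ℕ} (h : ℕ → ℝ) (i0 i1 : Fin d) (s : St d k) : ℝ :=
  h (n1 (s.1 - s.2.1)) + (4 * d : ℝ) * ∑ i, (psiA i0 i1 i s + psiB i0 i1 i s)

lemma psi_nonneg {d k : ℕ} (i0 i1 : Fin d) (i : Fin k) (s : St d k) :
    0 ≤ psiA i0 i1 i s ∧ 0 ≤ psiB i0 i1 i s := by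
  have := nsq_nonneg (s.1 - s.2.1)
  constructor
  · have h1 := qf_one_le i0 i1 (s.1 - s.2.2 i)
    exact sub_nonneg.2 (Real.log_le_log (by linarith) (by linarith))
  · have h1 := qf_one_le i0 i1 (s.2.1 - s.2.2 i)
    exact sub_nonneg.2 (Real.log_le_log (by linarith) (by linarith))

lemma psi_le {d k : ℕ} (i0 i1 : Fin d) (i : Fin k) (s : St d k) (h : nsq (s.1 - s.2.1) ≤ 1) :
    psiA i0 i1 i s ≤ 1 ∧ psiB i0 i1 i s ≤ 1 := by
  have key : ∀ q r : ℝ, 1 ≤ q → 0 ≤ r → r ≤ 1 → Real.log (q + r) - Real.log q ≤ 1 := by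
    intro q r hq hr hr1
    have h0 : 0 < q + r := by linarith
    have h1 : 0 < q := by linarith
    rw [← Real.log_div h0.ne' h1.ne']
    refine (Real.log_le_sub_one_of_pos (div_pos h0 h1)).trans ?_
    rw [sub_le_iff_le_add, div_le_iff₀ h1]
    linarith
  exact ⟨key _ _ (qf_one_le _ _ _) (nsq_nonneg _) h, key _ _ (qf_one_le _ _ _) (nsq_nonneg _) h⟩

lemma Phi_ge {d k : ℕ} (h : ℕ → ℝ) (i0 i1 : Fin d) (s : St d k) :
    h (n1 (s.1 - s.2.1)) ≤ Phi h i0 i1 s := by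
  unfold Phi
  have : 0 ≤ ∑ i, (psiA i0 i1 i s + psiB i0 i1 i s) :=
    Finset.sum_nonneg fun i _ => add_nonneg (psi_nonneg i0 i1 i s).1 (psi_nonneg i0 i1 i s).2
  have : 0 ≤ (4 * d : ℝ) * ∑ i, (psiA i0 i1 i s + psiB i0 i1 i s) := by positivity
  linarith

lemma coll_le {d k : ℕ} (a b : Fin d → ℤ) (y : Fin k → Fin d → ℤ) :
    coll (a, b, y) ≤ ∑ i, (adj a (y i) + adj b (y i)) := by
  have hn : ∀ i ∈ (Finset.univ : Finset (Fin k)), 0 ≤ adj a (y i) + adj b (y i) :=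
    fun i _ => add_nonneg (adj_nonneg _ _) (adj_nonneg _ _)
  unfold coll
  split_ifs with h
  · obtain ⟨e, ⟨i, hi⟩ | ⟨i, hi⟩⟩ := h
    · refine le_trans ?_ (Finset.single_le_sum hn (Finset.mem_univ i))
      have : adj a (y i) = 1 := if_pos ⟨e, hi.symm⟩
      rw [this]; linarith [adj_nonneg b (y i)]
    · refine le_trans ?_ (Finset.single_le_sum hn (Finset.mem_univ i))
      have : adj b (y i) = 1 := if_pos ⟨e, hi.symm⟩
      rw [this]; linarith [adj_nonneg a (y i)]
  · exact Finset.sum_nonneg hn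

/-- increments -/
def del (d : ℕ) (γ K : ℝ) (n : ℕ) : ℝ := ((n : ℝ) + 1) ^ (-γ) + K * (1 / (2 + 4 * d)) ^ n

/-- profile -/
def hh (d : ℕ) (γ K : ℝ) (n : ℕ) : ℝ := ∑ i ∈ Finset.range n, del d γ K i

lemma F1 (γ : ℝ) (h0 : 0 < γ) (h1 : γ < 1) (X : ℝ) (hX : 1 ≤ X) :
    (X + 1) ^ (-γ) ≤ X ^ (-γ) - γ / 2 * X ^ (-γ - 1) := by
  have hX0 : 0 < X := by linarith
  have hB : (X / (X + 1)) ^ γ ≤ 1 - γ / (X + 1) := by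
    have := _root_.rpow_one_add_le_one_add_mul_self (s := - (1 / (X + 1))) (p := γ)
      (by rw [neg_le_neg_iff, div_le_one (by linarith)]; linarith) h0.le h1.le
    have e : 1 + -(1 / (X + 1)) = X / (X + 1) := by field_simp; ring
    rw [e] at this
    refine this.trans (le_of_eq ?_); ring
  have e1 : (X + 1) ^ (-γ) = X ^ (-γ) * (X / (X + 1)) ^ γ := by
    rw [Real.div_rpow hX0.le (by linarith), Real.rpow_neg hX0.le, Real.rpow_neg (by linarith)]
    have := (Real.rpow_pos_of_pos hX0 γ).ne'
    field_simp
  have e2 : X ^ (-γ - 1) = X ^ (-γ) / X := Real.rpow_sub_one hX0.ne' _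
  have hp := Real.rpow_pos_of_pos hX0 (-γ)
  rw [e1, e2]
  have h3 : γ / 2 / X ≤ γ / (X + 1) := by
    rw [div_div]; apply div_le_div_of_nonneg_left h0.le (by linarith) (by linarith)
  calc X ^ (-γ) * (X / (X + 1)) ^ γ ≤ X ^ (-γ) * (1 - γ / 2 / X) := by
        apply mul_le_mul_of_nonneg_left _ hp.le; linarith
    _ = _ := by ring

lemma F2 (θ M β : ℝ) (h0 : 0 < θ) (h1 : θ < 1) (hM : 0 ≤ M) (hβ : 0 < β) (hβ1 : β ≤ 1) :
    ∃ K : ℝ, 0 ≤ K ∧ ∀ n : ℕ, M / ((n : ℝ) + 1) ^ 2 ≤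
      (1 - θ) / 2 * ((n : ℝ) + 1) ^ (-(1 - θ) - 1) + K * β ^ n := by
  have ht : Filter.Tendsto (fun n : ℕ => M * ((n : ℝ) + 1) ^ (-θ)) Filter.atTop (nhds (M * 0)) := by
    apply Filter.Tendsto.const_mul
    exact (tendsto_rpow_neg_atTop h0).comp
      (Filter.tendsto_atTop_add_const_right _ 1 tendsto_natCast_atTop_atTop)
  rw [mul_zero] at ht
  have hev := ht.eventually (gt_mem_nhds (show (0 : ℝ) < (1 - θ) / 2 by linarith))
  obtain ⟨R, hR⟩ := Filter.eventually_atTop.1 hev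
  refine ⟨M / β ^ R, by positivity, fun n => ?_⟩
  have hX : (0 : ℝ) < (n : ℝ) + 1 := by positivity
  have hp := Real.rpow_pos_of_pos hX (-(1 - θ) - 1)
  by_cases hn : R ≤ n
  · have e : M / ((n : ℝ) + 1) ^ 2 = M * ((n : ℝ) + 1) ^ (-θ) * ((n : ℝ) + 1) ^ (-(1 - θ) - 1) := by
      rw [mul_assoc, ← Real.rpow_add hX, div_eq_mul_inv, ← Real.rpow_natCast, ← Real.rpow_neg hX.le]
      congr 2; push_cast; ring
    rw [e]
    have := mul_le_mul_of_nonneg_right (hR n hn).le hp.le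
    have : 0 ≤ M / β ^ R * β ^ n := by positivity
    linarith
  · push Not at hn
    have h2 : β ^ R ≤ β ^ n := pow_le_pow_of_le_one hβ.le hβ1 hn.le
    have h3 : M ≤ M / β ^ R * β ^ n := by
      rw [div_mul_eq_mul_div, le_div_iff₀ (by positivity)]
      exact mul_le_mul_of_nonneg_left h2 hM
    have h4 : M / ((n : ℝ) + 1) ^ 2 ≤ M := by
      apply div_le_self hM
      have : (0 : ℝ) ≤ n := by positivity
      nlinarith
    have : 0 ≤ (1 - θ) / 2 * ((n : ℝ) + 1) ^ (-(1 - θ) - 1) := by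
      apply mul_nonneg _ hp.le; linarith
    linarith

lemma del_pos (d : ℕ) (γ K : ℝ) (hK : 0 ≤ K) (n : ℕ) : 0 ≤ del d γ K n := by
  unfold del; positivity

lemma hh_ge (d : ℕ) (θ K : ℝ) (h1 : θ < 1) (hK : 0 ≤ K) (n : ℕ) (hn : 0 < n) :
    (n : ℝ) ^ θ ≤ hh d (1 - θ) K n := by
  unfold hh
  have hn' : (0 : ℝ) < n := by exact_mod_cast hn
  have : ∀ i ∈ Finset.range n, (n : ℝ) ^ (-(1 - θ)) ≤ del d (1 - θ) K i := by
    intro i hi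
    have hi' : ((i : ℝ) + 1) ≤ n := by exact_mod_cast Finset.mem_range.1 hi
    unfold del
    have h2 : (n : ℝ) ^ (-(1 - θ)) ≤ ((i : ℝ) + 1) ^ (-(1 - θ)) :=
      Real.rpow_le_rpow_of_nonpos (by positivity) hi' (by linarith)
    have : 0 ≤ K * (1 / (2 + 4 * (d : ℝ))) ^ i := by positivity
    linarith
  have h3 := Finset.sum_le_sum this
  simp only [Finset.sum_const, Finset.card_range, nsmul_eq_mul] at h3
  refine le_trans (le_of_eq ?_) h3
  have e : (n : ℝ) ^ θ = (n : ℝ) ^ (1 + -(1 - θ)) := by congr 1; ring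
  rw [e, Real.rpow_add hn', Real.rpow_one]

/-- The main drift estimate. -/
lemma drift {d k : ℕ} (i0 i1 : Fin d) (h01 : i0 ≠ i1) (θ : ℝ) (h0 : 0 < θ) (h1 : θ < 1) :
    ∃ K : ℝ, 0 ≤ K ∧ ∀ s : St d k, Valid s → s.1 ≠ s.2.1 →
      Lc (Phi (hh d (1 - θ) K) i0 i1) s ≤
        -((1 - θ) / 2 * (n1 (s.1 - s.2.1) : ℝ) ^ (θ - 2)) := by
  set β : ℝ := 1 / (2 + 4 * d) with hβ
  have hβ0 : 0 < β := by positivity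
  have hβ1 : β ≤ 1 := by
    rw [hβ, div_le_one (by positivity)]
    have : (0 : ℝ) ≤ d := by positivity
    linarith
  set M : ℝ := 4 * d * (2 * k * ((8 + 8 * d) * d)) with hM
  obtain ⟨K, hK, hF2⟩ := F2 θ M β h0 h1 (by positivity) hβ0 hβ1
  refine ⟨K, hK, ?_⟩
  rintro ⟨a, b, y⟩ hv hab
  simp only at hab
  simp only
  obtain ⟨n, hn⟩ : ∃ n, n1 (a - b) = n + 1 := ⟨n1 (a-b) - 1, by have := n1_pos hab; omega⟩
  have hX : (1 : ℝ) ≤ (n : ℝ) + 1 := by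
    have : (0 : ℝ) ≤ n := by positivity
    linarith
  have f1 := F1 (1 - θ) (by linarith) (by linarith) ((n : ℝ) + 1) hX
  have f2 := hF2 n
  have hle1 : ((n : ℝ) + 1 + 1) ^ (-(1 - θ)) ≤ 1 :=
    Real.rpow_le_one_of_one_le_of_nonpos (by linarith) (by linarith)
  have hpp : 0 ≤ ((n : ℝ) + 1 + 1) ^ (-(1 - θ)) := by positivity
  have hanti : ∀ m, del d (1 - θ) K (m + 1) ≤ del d (1 - θ) K m := by
    intro m
    unfold del
    apply add_le_add
    · apply Real.rpow_le_rpow_of_nonpos (by positivity) (by push_cast; linarith) (by linarith)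
    · apply mul_le_mul_of_nonneg_left _ hK
      rw [← hβ]
      exact pow_le_pow_of_le_one hβ0.le hβ1 (Nat.le_succ m)
  have hL := Lc_h (k := k) (hh d (1 - θ) K) (del d (1 - θ) K)
    (fun m => Finset.sum_range_succ _ _) (del_pos d _ K hK) hanti a b y hab n hn
  have hnsq0 := nsq_pos hab
  have hnsq := nsq_ge (a - b)
  rw [hn] at hnsq
  push_cast at hnsq
  have hfrac : (8 + 8 * d : ℝ) / nsq (a - b) ≤ (8 + 8 * d) * d / ((n : ℝ) + 1) ^ 2 := by
    rw [div_le_div_iff₀ hnsq0 (by positivity), mul_assoc]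
    apply mul_le_mul_of_nonneg_left hnsq (by positivity)
  set D : ℝ := (8 + 8 * d) * d / ((n : ℝ) + 1) ^ 2 with hD
  have hpsi : Lc (fun s : St d k => ∑ i, (psiA i0 i1 i s + psiB i0 i1 i s)) (a, b, y) ≤
      2 * k * D - ∑ i, (adj a (y i) + adj b (y i)) := by
    rw [Lc_sum]
    have : ∀ i ∈ (Finset.univ : Finset (Fin k)),
        Lc (fun s : St d k => psiA i0 i1 i s + psiB i0 i1 i s) (a, b, y) ≤
          2 * D - (adj a (y i) + adj b (y i)) := by
      intro i _
      rw [Lc_add]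
      have p1 := Lc_psiA i0 i1 h01 a b y hv hab i
      have p2 := Lc_psiB i0 i1 h01 a b y hv hab i
      linarith
    refine (Finset.sum_le_sum this).trans (le_of_eq ?_)
    rw [Finset.sum_sub_distrib]
    simp
    ring
  have hcl := coll_le a b y
  have hc1 : coll (a, b, y) ≤ 1 := by unfold coll; split_ifs <;> norm_num
  have hc0 : 0 ≤ coll (a, b, y) := by unfold coll; split_ifs <;> norm_num
  set χ := ∑ i, (adj a (y i) + adj b (y i))
  set c := coll (a, b, y)
  have hPhi : Lc (Phi (hh d (1 - θ) K) i0 i1) (a, b, y) =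
      Lc (fun s : St d k => hh d (1 - θ) K (n1 (s.1 - s.2.1))) (a, b, y) +
      4 * d * Lc (fun s : St d k => ∑ i, (psiA i0 i1 i s + psiB i0 i1 i s)) (a, b, y) := by
    unfold Phi
    rw [Lc_add, Lc_smul]
  rw [hPhi, hn]
  have hd0 : (0 : ℝ) ≤ 4 * d := by positivity
  have hpsi' := mul_le_mul_of_nonneg_left hpsi hd0
  simp only [del] at hL
  rw [← hβ] at hL
  push_cast at hL ⊢
  have ex : θ - 2 = -(1 - θ) - 1 := by ring
  rw [ex]
  have eM : M / ((n : ℝ) + 1) ^ 2 = 4 * d * (2 * k * D) := by rw [hM, hD]; ring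
  rw [eM] at f2
  have hβn : β ^ (n + 1) * (2 + 4 * d) = β ^ n := by
    rw [pow_succ, hβ]; field_simp
  set P := ((n : ℝ) + 1) ^ (-(1 - θ) - 1)
  set A := ((n : ℝ) + 1 + 1) ^ (-(1 - θ))
  set B := ((n : ℝ) + 1) ^ (-(1 - θ))
  have g1 : 4 * d * (A * c) ≤ 4 * d * χ := by
    apply mul_le_mul_of_nonneg_left _ hd0
    nlinarith
  have g2 : 4 * d * (K * β ^ (n+1)) * c ≤ 4 * d * (K * β ^ (n+1)) :=
    mul_le_of_le_one_right (by positivity) hc1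
  have g3 : K * (β ^ (n + 1) * (2 + 4 * d)) = K * β ^ n := by rw [hβn]
  nlinarith


/-! ### Discrete-time induction -/

/-- Uniformization rate. -/
def Lam (d k : ℕ) : ℝ := 4 * d + 2 * d * k + 1

lemma Lam_ge (d k : ℕ) : 1 ≤ Lam d k := by
  unfold Lam
  have : (0 : ℝ) ≤ 4 * d + 2 * d * k := by positivity
  linarith

/-- One step of the discrete skeleton. -/
def Qs {d k : ℕ} (Λ : ℝ) (u : Conf d k → ℝ) (x : Conf d k) : ℝ := u x + Lab u x / Λ

lemma rate_sum {d k : ℕ} (s : St d k) : ∑ m, rate s m ≤ Lam d k := by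
  have h : ∑ m, rate s m ≤ ∑ _m : Mv d k, (1 : ℝ) := Finset.sum_le_sum fun m _ => rate_le s m
  refine h.trans ?_
  simp only [Finset.sum_const, Finset.card_univ, Fintype.card_sum, Fintype.card_prod,
    Fintype.card_fin, Fintype.card_bool, nsmul_eq_mul, mul_one, Lam]
  push_cast
  linarith

lemma P_mono {d k : ℕ} (F G : St d k → ℝ) (s : St d k) (hv : Valid s) (hab : s.1 ≠ s.2.1)
    (h : ∀ s', Valid s' → F s' ≤ G s') :
    F s + Lc F s / Lam d k ≤ G s + Lc G s / Lam d k := by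
  have hL : 0 < Lam d k := by linarith [Lam_ge d k]
  have e : ∀ H : St d k → ℝ, H s + Lc H s / Lam d k =
      ((Lam d k - ∑ m, rate s m) * H s + ∑ m, rate s m * H (nxt s m)) / Lam d k := by
    intro H
    unfold Lc
    simp only [mul_sub, Finset.sum_sub_distrib, ← Finset.sum_mul]
    field_simp
    ring
  rw [e, e]
  apply div_le_div_of_nonneg_right _ hL.le
  apply add_le_add
  · exact mul_le_mul_of_nonneg_left (h s hv) (by linarith [rate_sum s])
  · refine Finset.sum_le_sum fun m _ => ?_
    by_cases hm : rate s m = 0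
    · rw [hm]; simp
    · exact mul_le_mul_of_nonneg_left (h _ (valid_nxt s hv hab m hm)) (rate_nonneg s m)

lemma numeric (θ c Λ lam Φ L : ℝ) (n m : ℕ) (h0 : 0 < θ) (h1 : θ < 1) (hc : 0 < c) (hΛ : 0 < Λ)
    (hl1 : 1 ≤ lam) (hl2 : Λ / c ≤ lam) (hn : 0 < n) (hΦ : (n : ℝ) ^ θ ≤ Φ)
    (hL : L ≤ -(c * (n : ℝ) ^ (θ - 2)))
    (hs : lam * Φ * ((m : ℝ) + 1 + 1) ^ (-(θ / 2)) ≤ 1) :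
    (Φ + L / Λ) * ((m : ℝ) + 1) ^ (-(θ / 2)) ≤ Φ * ((m : ℝ) + 1 + 1) ^ (-(θ / 2)) := by
  have hn' : (0 : ℝ) < n := by exact_mod_cast hn
  have hM : (0 : ℝ) < (m : ℝ) + 1 := by positivity
  set X : ℝ := (m : ℝ) + 1 with hX
  have hX1 : 0 < X + 1 := by linarith
  have hΦ0 : 0 < Φ := lt_of_lt_of_le (Real.rpow_pos_of_pos hn' θ) hΦ
  have hl0 : 0 < lam := by linarith
  have hpow := Real.rpow_pos_of_pos hX1 (θ / 2)
  have hs' : lam * Φ ≤ (X + 1) ^ (θ / 2) := by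
    rw [Real.rpow_neg hX1.le, ← div_eq_mul_inv, div_le_one hpow] at hs
    exact hs
  have hΦle : Φ ≤ (X + 1) ^ (θ / 2) := by nlinarith
  have hnX : (n : ℝ) ^ (2 : ℝ) ≤ X + 1 := by
    have h2 : ((n : ℝ) ^ (2 : ℝ)) ^ (θ / 2) ≤ (X + 1) ^ (θ / 2) := by
      rw [← Real.rpow_mul hn'.le]
      have : (2 : ℝ) * (θ / 2) = θ := by ring
      rw [this]; linarith
    exact (Real.rpow_le_rpow_iff (by positivity) hX1.le (by linarith)).1 h2
  have hnp : (X + 1) ^ (θ / 2 - 1) ≤ (n : ℝ) ^ (θ - 2) := by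
    have e : (n : ℝ) ^ (θ - 2) = ((n : ℝ) ^ (2 : ℝ)) ^ (θ / 2 - 1) := by
      rw [← Real.rpow_mul hn'.le]; congr 1; ring
    rw [e]
    exact Real.rpow_le_rpow_of_nonpos (by positivity) hnX (by linarith)
  rw [Real.rpow_sub_one hX1.ne'] at hnp
  have hkey : Φ / (X + 1) ≤ c / Λ * (n : ℝ) ^ (θ - 2) := by
    have hcl : 1 / lam ≤ c / Λ := by
      rw [div_le_div_iff₀ hl0 hΛ]
      rw [div_le_iff₀ hc] at hl2
      linarith
    calc Φ / (X + 1) ≤ (1 / lam * (X + 1) ^ (θ / 2)) / (X + 1) := by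
          apply div_le_div_of_nonneg_right _ hX1.le
          rw [one_div, ← div_eq_inv_mul, le_div_iff₀ hl0]; linarith
      _ = 1 / lam * ((X + 1) ^ (θ / 2) / (X + 1)) := by ring
      _ ≤ c / Λ * (n : ℝ) ^ (θ - 2) := by
          apply mul_le_mul hcl hnp (by positivity) (by positivity)
  have hLL : L / Λ ≤ - (Φ / (X + 1)) := by
    have : L / Λ ≤ -(c * (n : ℝ) ^ (θ - 2)) / Λ := div_le_div_of_nonneg_right hL hΛ.le
    have e : -(c * (n : ℝ) ^ (θ - 2)) / Λ = - (c / Λ * (n : ℝ) ^ (θ - 2)) := by ring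
    linarith
  have h3 : Φ + L / Λ ≤ Φ * (X / (X + 1)) := by
    have : Φ * (X / (X + 1)) = Φ - Φ / (X + 1) := by field_simp; ring
    linarith
  have hr : X / (X + 1) ≤ (X / (X + 1)) ^ (θ / 2) := by
    have := Real.rpow_le_rpow_of_exponent_ge (x := X / (X + 1)) (y := 1) (z := θ / 2)
      (by positivity) (by rw [div_le_one hX1]; linarith) (by linarith)
    rwa [Real.rpow_one] at this
  have hp := Real.rpow_pos_of_pos hM (θ / 2)
  calc (Φ + L / Λ) * X ^ (-(θ / 2)) ≤ (Φ * (X / (X + 1)) ^ (θ / 2)) * X ^ (-(θ / 2)) := by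
        apply mul_le_mul_of_nonneg_right _ (by positivity)
        exact h3.trans (mul_le_mul_of_nonneg_left hr hΦ0.le)
    _ = Φ * (X + 1) ^ (-(θ / 2)) := by
        rw [Real.div_rpow hM.le hX1.le, Real.rpow_neg hM.le, Real.rpow_neg hX1.le]
        field_simp

lemma Qs_bdd {d k : ℕ} (i0 i1 : Fin d) (h01 : i0 ≠ i1) (θ : ℝ) (h0 : 0 < θ) (h1 : θ < 1) :
    ∃ lam K : ℝ, 1 ≤ lam ∧ 0 ≤ K ∧ ∀ (u : Conf d (k + 1) → ℝ), (∀ x, |u x| ≤ 1) →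
      ∀ (m : ℕ) (s : St d k), Valid s →
      |(Qs (Lam d k))^[m] u (Fin.cons s.1 s.2.2) - (Qs (Lam d k))^[m] u (Fin.cons s.2.1 s.2.2)| ≤
        2 * min 1 (lam * Phi (hh d (1 - θ) K) i0 i1 s * ((m : ℝ) + 1) ^ (-(θ / 2))) := by
  obtain ⟨K, hK, hdr⟩ := drift (k := k) i0 i1 h01 θ h0 h1
  set c : ℝ := (1 - θ) / 2 with hc
  have hc0 : 0 < c := by rw [hc]; linarith
  have hΛ : 0 < Lam d k := by linarith [Lam_ge d k]
  set lam : ℝ := max 1 (Lam d k / c) with hlam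
  have hl1 : 1 ≤ lam := le_max_left _ _
  refine ⟨lam, K, hl1, hK, fun u hu m => ?_⟩
  set Φ := Phi (k := k) (hh d (1 - θ) K) i0 i1 with hΦ
  have hPhi1 : ∀ s : St d k, s.1 ≠ s.2.1 → (n1 (s.1 - s.2.1) : ℝ) ^ θ ≤ Φ s := fun s hab =>
    (hh_ge d θ K h1 hK _ (n1_pos hab)).trans (Phi_ge _ i0 i1 s)
  have hPhi0 : ∀ s : St d k, 0 ≤ Φ s := fun s => by
    refine le_trans ?_ (Phi_ge _ i0 i1 s)
    exact Finset.sum_nonneg fun i _ => del_pos d _ K hK i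
  induction m with
  | zero =>
    intro s hv
    simp only [Function.iterate_zero, id]
    by_cases hab : s.1 = s.2.1
    · rw [hab]
      have := hPhi0 s
      simp
      positivity
    · have h2 : (1 : ℝ) ≤ Φ s := by
        refine le_trans ?_ (hPhi1 s hab)
        have : (1 : ℝ) ≤ n1 (s.1 - s.2.1) := by exact_mod_cast n1_pos hab
        exact Real.one_le_rpow this h0.le
      have h3 : (1 : ℝ) ≤ lam * Φ s := by nlinarith
      simp only [Nat.cast_zero, zero_add, Real.one_rpow, mul_one, min_eq_left h3]
      have ha := abs_le.1 (hu (Fin.cons s.1 s.2.2))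
      have hb := abs_le.1 (hu (Fin.cons s.2.1 s.2.2))
      rw [abs_le]; constructor <;> linarith
  | succ m ih =>
    intro s hv
    by_cases hab : s.1 = s.2.1
    · rw [hab]
      have := hPhi0 s
      simp
      positivity
    set v := (Qs (Lam d k))^[m] u with hvdef
    rw [Function.iterate_succ_apply', ← hvdef]
    set D : St d k → ℝ := fun s => v (Fin.cons s.1 s.2.2) - v (Fin.cons s.2.1 s.2.2) with hD
    set ρ : ℝ := ((m : ℝ) + 1) ^ (-(θ / 2)) with hρ
    have hρ0 : 0 < ρ := by positivity
    have hstep : Qs (Lam d k) v (Fin.cons s.1 s.2.2) - Qs (Lam d k) v (Fin.cons s.2.1 s.2.2)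
        = D s + Lc D s / Lam d k := by
      have := coupling v s.1 s.2.1 s.2.2 hv hab
      simp only [Qs]
      rw [hD]
      rw [← this]
      ring
    rw [hstep]
    have hub : ∀ G : St d k → ℝ, (∀ s', Valid s' → min 1 (lam * Φ s' * ρ) ≤ G s') →
        |D s + Lc D s / Lam d k| ≤ 2 * (G s + Lc G s / Lam d k) := by
      intro G hG
      rw [abs_le]
      have e1 := Lc_smul 2 G s
      have e2 := Lc_smul (-2) G s
      constructor
      · have := P_mono (fun s => (-2) * G s) D s hv hab (fun s' hs' => by
          have := (abs_le.1 (ih s' hs')).1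
          have := hG s' hs'
          simp only [hD]; linarith)
        rw [e2] at this
        have e3 : -(2 * (G s + Lc G s / Lam d k)) = -2 * G s + -2 * Lc G s / Lam d k := by ring
        rw [e3]; exact this
      · have := P_mono D (fun s => 2 * G s) s hv hab (fun s' hs' => by
          have := (abs_le.1 (ih s' hs')).2
          have := hG s' hs'
          simp only [hD]; linarith)
        rw [e1] at this
        have e3 : (2 * (G s + Lc G s / Lam d k)) = 2 * G s + 2 * Lc G s / Lam d k := by ring
        rw [e3]; exact this
    push_cast
    rcases le_total 1 (lam * Φ s * ((m : ℝ) + 1 + 1) ^ (-(θ / 2))) with hcase | hcase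
    · rw [min_eq_left hcase]
      have := hub (fun _ => 1) (fun s' _ => min_le_left _ _)
      have e : Lc (fun _ : St d k => (1 : ℝ)) s = 0 := by simp [Lc]
      rw [e] at this
      simpa using this
    · rw [min_eq_right hcase]
      have := hub (fun s' => (lam * ρ) * Φ s') (fun s' _ => (min_le_right _ _).trans (by
        rw [mul_right_comm]))
      rw [Lc_smul] at this
      have hnum := numeric θ c (Lam d k) lam (Φ s) (Lc Φ s) (n1 (s.1 - s.2.1)) m h0 h1 hc0 hΛ hl1
        (le_max_right _ _) (n1_pos hab) (hPhi1 s hab) (hdr s hv hab) hcase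
      refine this.trans ?_
      have h2 := mul_le_mul_of_nonneg_left hnum (by linarith : 0 ≤ lam)
      have e : lam * ρ * Φ s + lam * ρ * Lc Φ s / Lam d k =
        lam * ((Φ s + Lc Φ s / Lam d k) * ρ) := by ring
      rw [e]
      linarith

/-! ### The generator in label form -/

lemma int_sq_one {ι : Type*} [Fintype ι] [DecidableEq ι] (w : ι → ℤ) :
    ∑ i, ((w i : ℝ)) ^ 2 = 1 ↔ ∃ i, ∃ b : Bool, w = Pi.single i (if b then 1 else -1) := by
  have e : ∑ i, ((w i : ℝ)) ^ 2 = 1 ↔ ∑ i, (w i) ^ 2 = 1 := by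
    constructor
    · intro h; exact_mod_cast h
    · intro h; exact_mod_cast h
  rw [e]
  constructor
  · intro h
    have hne : ∃ i, w i ≠ 0 := by
      by_contra hcon
      push Not at hcon
      simp [hcon] at h
    obtain ⟨i, hi⟩ := hne
    rw [← Finset.add_sum_erase _ _ (Finset.mem_univ i)] at h
    have h1 : 0 < w i ^ 2 := by positivity
    have h2 : ∀ j ∈ Finset.univ.erase i, 0 ≤ w j ^ 2 := fun j _ => by positivity
    have h3 := Finset.sum_nonneg h2
    have h4 : w i ^ 2 = 1 := by omega
    have h5 : ∑ j ∈ Finset.univ.erase i, w j ^ 2 = 0 := by omega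
    rw [Finset.sum_eq_zero_iff_of_nonneg h2] at h5
    refine ⟨i, decide (w i = 1), ?_⟩
    funext j
    by_cases hj : j = i
    · subst hj
      have h7 : (w j - 1) * (w j + 1) = 0 := by linear_combination h4
      rcases mul_eq_zero.1 h7 with h6 | h6
      · have : w j = 1 := by omega
        simp [this]
      · have : w j = -1 := by omega
        simp [this]
    · have := h5 j (by simp [hj])
      rw [Pi.single_eq_of_ne hj]
      exact pow_eq_zero_iff (two_ne_zero) |>.1 this
  · rintro ⟨i, b, rfl⟩
    rw [Finset.sum_eq_single i]
    · cases b <;> simp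
    · intro j _ hj; simp [Pi.single_eq_of_ne hj]
    · simp

lemma vnorm_one {d : ℕ} (v : Fin d → ℤ) : vnorm v = 1 ↔ ∃ e, v = ev e := by
  unfold vnorm
  rw [Real.sqrt_eq_one, int_sq_one]
  constructor
  · rintro ⟨i, b, h⟩; exact ⟨(i, b), h⟩
  · rintro ⟨⟨i, b⟩, h⟩; exact ⟨i, b, h⟩

lemma cnorm_one {d k : ℕ} (v : Conf d k) :
    cnorm v = 1 ↔ ∃ i : Fin k, ∃ e, v = Pi.single i (ev e) := by
  unfold cnorm
  have := int_sq_one (fun p : Fin k × Fin d => v p.1 p.2)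
  rw [Fintype.sum_prod_type] at this
  rw [Real.sqrt_eq_one, this]
  have key : ∀ (i : Fin k) (j : Fin d) (b : Bool),
      ((fun p : Fin k × Fin d => v p.1 p.2) = Pi.single (i, j) (if b then 1 else -1)) ↔
        v = Pi.single i (ev (j, b)) := by
    intro i j b
    constructor
    · intro h
      funext i' j'
      have := congrFun h (i', j')
      simp only at this
      rw [this]
      by_cases h1 : i' = i
      · subst h1
        by_cases h2 : j' = j
        · subst h2; simp [ev]
        · simp [ev, h2]
      · simp [h1]
    · rintro rfl
      funext ⟨i', j'⟩
      by_cases h1 : i' = i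
      · subst h1
        by_cases h2 : j' = j
        · subst h2; simp [ev]
        · simp [ev, h2]
      · simp [h1]
  constructor
  · rintro ⟨⟨i, j⟩, b, h⟩; exact ⟨i, (j, b), (key i j b).1 h⟩
  · rintro ⟨i, ⟨j, b⟩, h⟩; exact ⟨(i, j), b, (key i j b).2 h⟩

lemma upd_tr {d k : ℕ} (x : Conf d k) (hx : Function.Injective x) (i : Fin k) (q : Fin d → ℤ)
    (hq : q ∉ Set.range x) : Function.update x i q = tr (x i) q x := by
  funext j
  by_cases hj : j = i
  · subst hj; simp [tr]
  · rw [Function.update_of_ne hj]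
    simp only [tr]
    rw [Equiv.swap_apply_of_ne_of_ne]
    · exact fun h => hj (hx h)
    · exact fun h => hq ⟨j, h⟩

lemma cswap_tr {d k : ℕ} (x : Conf d k) (hx : Function.Injective x) (i j : Fin k) :
    cswap i j x = tr (x i) (x j) x := by
  funext l
  simp only [cswap, tr, Function.comp]
  exact (hx.map_swap _ _ _)

lemma Lexc_eq_Lab {d k : ℕ} (f : Conf d k → ℝ) (x : Conf d k) (hx : Function.Injective x) :
    Lexc f x = Lab f x := by
  unfold Lexc
  have h1 : (∑' y : Conf d k, if cnorm (y - x) = 1 ∧ y ∈ SSet d k then f y - f x else 0) =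
      ∑ i, ∑ e, if x i + ev e ∈ Set.range x then 0 else f (tr (x i) (x i + ev e) x) - f x := by
    let φ : Fin k × (Fin d × Bool) → Conf d k := fun p => x + Pi.single p.1 (ev p.2)
    have hφ : Function.Injective φ := by
      rintro ⟨i, e⟩ ⟨i', e'⟩ h
      simp only [φ, add_right_inj] at h
      have h2 := congrFun h i
      by_cases hi : i = i'
      · subst hi
        simp only [Pi.single_eq_same] at h2
        rw [ev_inj h2]
      · rw [Pi.single_eq_same, Pi.single_eq_of_ne hi] at h2
        exact absurd h2 (ev_ne_zero e)
    rw [← hφ.tsum_eq, tsum_fintype, Fintype.sum_prod_type]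
    · refine Finset.sum_congr rfl fun i _ => Finset.sum_congr rfl fun e _ => ?_
      have hc : cnorm (φ (i, e) - x) = 1 := by
        rw [cnorm_one]; exact ⟨i, e, by simp [φ]⟩
      have hup : φ (i, e) = Function.update x i (x i + ev e) := by
        funext j
        by_cases hj : j = i
        · subst hj; simp [φ]
        · simp [φ, hj]
      by_cases hr : x i + ev e ∈ Set.range x
      · rw [if_pos hr, if_neg]
        rintro ⟨-, hS⟩
        rw [mem_SSet] at hS
        obtain ⟨j, hj⟩ := hr
        have hji : j ≠ i := by
          rintro rfl
          exact ev_ne_zero e (by simpa using hj)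
        apply hji
        apply hS
        rw [hup, Function.update_of_ne hji, Function.update_self, hj]
      · rw [if_neg hr]
        rw [hup, upd_tr x hx i _ hr] at hc ⊢
        rw [if_pos]
        refine ⟨hc, ?_⟩
        rw [mem_SSet]; exact tr_inj _ _ hx
    · intro y hy
      rw [Function.mem_support] at hy
      have : cnorm (y - x) = 1 := by
        by_contra hcon
        exact hy (if_neg (fun h => hcon h.1))
      rw [cnorm_one] at this
      obtain ⟨i, e, h⟩ := this
      exact ⟨(i, e), by simp only [φ]; rw [← h]; abel⟩
  have h2 : (∑ i : Fin k, ∑ j : Fin k,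
      if i < j ∧ vnorm (x i - x j) = 1 ∧ x ∈ SSet d k then f (cswap i j x) - f x else 0) =
      ∑ i, ∑ e, if x i + ev e ∈ Set.range x then
        (1 / 2 : ℝ) * (f (tr (x i) (x i + ev e) x) - f x) else 0 := by
    let A : Fin k → Fin k → ℝ := fun i j =>
      ∑ e, if x i + ev e = x j then (f (tr (x i) (x i + ev e) x) - f x) else 0
    have hA : ∀ i j, A i j = if vnorm (x i - x j) = 1 then f (tr (x i) (x j) x) - f x else 0 := by
      intro i j
      by_cases h : vnorm (x i - x j) = 1
      · rw [if_pos h]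
        rw [vnorm_one] at h
        obtain ⟨e, he⟩ := h
        have he' : x i + ev (eneg e) = x j := by rw [ev_eneg, ← he]; abel
        simp only [A]
        rw [Finset.sum_eq_single (eneg e), if_pos he', he']
        · intro e' _ hne
          rw [if_neg]
          intro h3
          apply hne
          apply ev_inj
          rw [← he'] at h3
          exact add_left_cancel h3
        · simp
      · rw [if_neg h]
        refine Finset.sum_eq_zero fun e _ => if_neg fun h3 => h ?_
        rw [vnorm_one]
        exact ⟨eneg e, by rw [ev_eneg, ← h3]; abel⟩
    have hsymm : ∀ i j, A i j = A j i := by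
      intro i j
      rw [hA, hA, tr_comm]
      have : vnorm (x i - x j) = vnorm (x j - x i) := by
        unfold vnorm
        congr 1
        refine Finset.sum_congr rfl fun l _ => ?_
        simp only [Pi.sub_apply]; push_cast; ring
      rw [this]
    have hdiag : ∀ i, A i i = 0 := by
      intro i
      rw [hA, sub_self]
      have : vnorm (0 : Fin d → ℤ) = 0 := by simp [vnorm]
      rw [this]; simp
    have hS : x ∈ SSet d k := (mem_SSet x).2 hx
    have hL : ∀ i j, (if i < j ∧ vnorm (x i - x j) = 1 ∧ x ∈ SSet d k
        then f (cswap i j x) - f x else 0) = if i < j then A i j else 0 := by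
      intro i j
      rw [hA, cswap_tr x hx]
      by_cases h1 : i < j <;> by_cases h2 : vnorm (x i - x j) = 1 <;> simp [h1, h2, hS]
    have hfull : ∑ i, ∑ j, A i j = 2 * ∑ i, ∑ j, if i < j then A i j else 0 := by
      have e : ∀ i j, A i j = (if i < j then A i j else 0) + (if j < i then A j i else 0) := by
        intro i j
        rcases lt_trichotomy i j with h | h | h
        · simp [h, h.not_gt]
        · subst h; simp [hdiag]
        · simp [h, h.not_gt, hsymm i j]
      have e2 : ∑ i, ∑ j, A i j = (∑ i, ∑ j, if i < j then A i j else 0) +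
          ∑ i, ∑ j, if j < i then A j i else 0 := by
        rw [← Finset.sum_add_distrib]
        refine Finset.sum_congr rfl fun i _ => ?_
        rw [← Finset.sum_add_distrib]
        exact Finset.sum_congr rfl fun j _ => e i j
      rw [e2, Finset.sum_comm (f := fun i j => if j < i then A j i else 0)]
      ring
    simp only [hL]
    have hrow : ∀ i, ∑ j, A i j = ∑ e, if x i + ev e ∈ Set.range x then
        (f (tr (x i) (x i + ev e) x) - f x) else 0 := by
      intro i
      simp only [A]
      rw [Finset.sum_comm]
      refine Finset.sum_congr rfl fun e _ => ?_
      by_cases h : x i + ev e ∈ Set.range x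
      · rw [if_pos h]
        obtain ⟨j, hj⟩ := h
        rw [Finset.sum_eq_single j, if_pos hj.symm]
        · intro j' _ hne
          rw [if_neg]
          intro h3
          exact hne (hx (by rw [← h3, hj]))
        · simp
      · rw [if_neg h]
        exact Finset.sum_eq_zero fun j _ => if_neg fun h3 => h ⟨j, h3.symm⟩
    have h4 : (∑ i, ∑ j, if i < j then A i j else 0) = 1 / 2 * ∑ i, ∑ j, A i j := by
      rw [hfull]; ring
    rw [h4, Finset.mul_sum]
    refine Finset.sum_congr rfl fun i _ => ?_
    rw [hrow, Finset.mul_sum]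
    refine Finset.sum_congr rfl fun e _ => ?_
    split_ifs <;> simp
  rw [h1, h2, ← Finset.sum_add_distrib]
  unfold Lab
  refine Finset.sum_congr rfl fun i _ => ?_
  rw [← Finset.sum_add_distrib]
  refine Finset.sum_congr rfl fun e _ => ?_
  unfold wt
  split_ifs <;> ring

lemma Lab_congr {d k : ℕ} (f g : Conf d k → ℝ) (h : ∀ x, Function.Injective x → f x = g x)
    (x : Conf d k) (hx : Function.Injective x) : Lab f x = Lab g x := by
  unfold Lab
  refine Finset.sum_congr rfl fun i _ => Finset.sum_congr rfl fun e _ => ?_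
  rw [h x hx, h _ (tr_inj _ _ hx)]

lemma Lexc_iter {d k : ℕ} (f : Conf d k → ℝ) (n : ℕ) : ∀ x : Conf d k, Function.Injective x →
    (Lexc^[n] f) x = (Lab^[n] f) x := by
  induction n with
  | zero => intro x _; rfl
  | succ n ih =>
    intro x hx
    rw [Function.iterate_succ_apply', Function.iterate_succ_apply', Lexc_eq_Lab _ _ hx]
    exact Lab_congr _ _ ih x hx

/-! ### Exponentials and Poissonization -/

lemma rpow_cmp (p a b : ℝ) (hp0 : 0 < p) (hp1 : p ≤ 1) (ha : 0 < a) (hb : 0 < b) :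
    a ^ (-p) ≤ b ^ (-p) * (1 + b / a) := by
  have h : (b / a) ^ p ≤ 1 + b / a := by
    have hr : 0 < b / a := by positivity
    rcases le_total (b / a) 1 with h1 | h1
    · have := Real.rpow_le_one hr.le h1 hp0.le
      linarith
    · have := Real.rpow_le_rpow_of_exponent_le h1 hp1
      rw [Real.rpow_one] at this
      linarith
  have e : a ^ (-p) = b ^ (-p) * (b / a) ^ p := by
    rw [Real.div_rpow hb.le ha.le, Real.rpow_neg ha.le, Real.rpow_neg hb.le]
    have := (Real.rpow_pos_of_pos hb p).ne'
    field_simp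
  rw [e]
  exact mul_le_mul_of_nonneg_left h (by positivity)

lemma exp_hasSum (μ : ℝ) : HasSum (fun n : ℕ => μ ^ n / (n.factorial : ℝ)) (Real.exp μ) := by
  have := NormedSpace.expSeries_div_hasSum_exp (𝔸 := ℝ) μ
  rwa [← Real.exp_eq_exp_ℝ] at this

lemma poisson (μ p M c : ℝ) (hμ : 0 ≤ μ) (hp0 : 0 < p) (hp1 : p ≤ 1) (hM : 0 ≤ M) (g : ℕ → ℝ)
    (hg : ∀ n : ℕ, |g n| ≤ M * ((n : ℝ) + 1) ^ (-p))
    (hc : HasSum (fun n : ℕ => Real.exp (-μ) * (μ ^ n / (n.factorial : ℝ) * g n)) c) :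
    |c| ≤ 3 * M * (1 + μ) ^ (-p) := by
  have h1 := exp_hasSum μ
  have h2 : HasSum (fun n : ℕ => μ ^ (n + 1) / ((n + 1).factorial : ℝ)) (Real.exp μ - 1) := by
    have := (hasSum_nat_add_iff' (f := fun n : ℕ => μ ^ n / (n.factorial : ℝ)) 1).2 h1
    simpa using this
  have h3 := ((h1.mul_left 2).add h2).mul_left (Real.exp (-μ) * M * (1 + μ) ^ (-p))
  have hE : Real.exp (-μ) * Real.exp μ = 1 := by rw [← Real.exp_add]; simp
  have hb : 0 < (1 + μ) ^ (-p) := Real.rpow_pos_of_pos (by linarith) _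
  have hterm : ∀ n : ℕ, |Real.exp (-μ) * (μ ^ n / (n.factorial : ℝ) * g n)| ≤
      Real.exp (-μ) * M * (1 + μ) ^ (-p) *
        (2 * (μ ^ n / (n.factorial : ℝ)) + μ ^ (n + 1) / ((n + 1).factorial : ℝ)) := by
    intro n
    have hn : (0 : ℝ) < (n : ℝ) + 1 := by positivity
    have hq : 0 ≤ μ ^ n / (n.factorial : ℝ) := by positivity
    rw [abs_mul, abs_mul, abs_of_pos (Real.exp_pos _), abs_of_nonneg hq, mul_assoc, mul_assoc]
    apply mul_le_mul_of_nonneg_left _ (Real.exp_pos _).le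
    have hcmp := rpow_cmp p ((n : ℝ) + 1) (1 + μ) hp0 hp1 hn (by linarith)
    calc μ ^ n / (n.factorial : ℝ) * |g n|
        ≤ μ ^ n / (n.factorial : ℝ) * (M * ((1 + μ) ^ (-p) * (1 + (1 + μ) / ((n : ℝ) + 1)))) := by
          apply mul_le_mul_of_nonneg_left _ hq
          exact (hg n).trans (mul_le_mul_of_nonneg_left hcmp hM)
      _ = M * ((1 + μ) ^ (-p) * (μ ^ n / (n.factorial : ℝ) *
            (1 + (1 + μ) / ((n : ℝ) + 1)))) := by ring
      _ ≤ _ := by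
          apply mul_le_mul_of_nonneg_left _ hM
          apply mul_le_mul_of_nonneg_left _ hb.le
          rw [Nat.factorial_succ, pow_succ]
          push_cast
          have hf : (0 : ℝ) < n.factorial := by positivity
          have e : μ ^ n / (n.factorial : ℝ) * (1 + (1 + μ) / ((n : ℝ) + 1)) =
            μ ^ n / (n.factorial : ℝ) + μ ^ n / (n.factorial : ℝ) / ((n : ℝ) + 1) +
            μ ^ n * μ / (((n : ℝ) + 1) * (n.factorial : ℝ)) := by field_simp; ring
          rw [e]
          have : μ ^ n / (n.factorial : ℝ) / ((n : ℝ) + 1) ≤ μ ^ n / (n.factorial : ℝ) := by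
            apply div_le_self hq
            linarith [(Nat.cast_nonneg n : (0 : ℝ) ≤ n)]
          linarith
  have hfin : Real.exp (-μ) * M * (1 + μ) ^ (-p) * (2 * Real.exp μ + (Real.exp μ - 1)) ≤
      3 * M * (1 + μ) ^ (-p) := by
    have : Real.exp (-μ) * M * (1 + μ) ^ (-p) * (2 * Real.exp μ + (Real.exp μ - 1)) =
      M * (1 + μ) ^ (-p) * (3 * (Real.exp (-μ) * Real.exp μ) - Real.exp (-μ)) := by ring
    rw [this, hE]
    have h4 : 0 ≤ M * (1 + μ) ^ (-p) := mul_nonneg hM hb.le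
    nlinarith [Real.exp_pos (-μ)]
  refine le_trans ?_ hfin
  rw [abs_le]
  constructor
  · exact hasSum_le (fun n => (abs_le.1 (hterm n)).1) h3.neg hc
  · exact hasSum_le (fun n => (abs_le.1 (hterm n)).2) hc h3

/-- Bounded functions on configurations. -/
abbrev Bd (d k : ℕ) := BoundedContinuousFunction (Conf d k) ℝ

lemma Lab_bound {d k : ℕ} (u : Conf d k → ℝ) (C : ℝ) (hu : ∀ x, |u x| ≤ C) (x : Conf d k) :
    |Lab u x| ≤ (k * (d * 2) * 2) * C := by
  unfold Lab
  have hcell : ∀ i e, |wt x (x i + ev e) * (u (tr (x i) (x i + ev e) x) - u x)| ≤ 2 * C := by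
    intro i e
    rw [abs_mul]
    have h1 : |wt x (x i + ev e)| ≤ 1 := by unfold wt; split_ifs <;> norm_num [abs_le]
    have h2 : |u (tr (x i) (x i + ev e) x) - u x| ≤ 2 * C := by
      have ha := abs_le.1 (hu x)
      have hb := abs_le.1 (hu (tr (x i) (x i + ev e) x))
      rw [abs_le]; constructor <;> linarith
    have h3 := abs_nonneg (u (tr (x i) (x i + ev e) x) - u x)
    nlinarith [abs_nonneg (wt x (x i + ev e))]
  calc _ ≤ ∑ i, |∑ e, wt x (x i + ev e) * (u (tr (x i) (x i + ev e) x) - u x)| :=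
        Finset.abs_sum_le_sum_abs _ _
    _ ≤ ∑ i : Fin k, ∑ e : Fin d × Bool, 2 * C := by
        refine Finset.sum_le_sum fun i _ => ?_
        exact (Finset.abs_sum_le_sum_abs _ _).trans (Finset.sum_le_sum fun e _ => hcell i e)
    _ = _ := by
        simp only [Finset.sum_const, Finset.card_univ, Fintype.card_prod,
          Fintype.card_fin, Fintype.card_bool, nsmul_eq_mul]
        push_cast; ring

/-- The generator as a bounded operator. -/
def Lop (d k : ℕ) : Bd d k →L[ℝ] Bd d k :=
  LinearMap.mkContinuous
    { toFun := fun u => BoundedContinuousFunction.ofNormedAddCommGroup (Lab u)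
        continuous_of_discreteTopology _
        (fun x => Lab_bound u ‖u‖ (fun x => u.norm_coe_le_norm x) x)
      map_add' := fun u v => by
        ext x
        simp only [BoundedContinuousFunction.coe_ofNormedAddCommGroup,
          BoundedContinuousFunction.coe_add, Pi.add_apply, Lab, ← Finset.sum_add_distrib]
        refine Finset.sum_congr rfl fun i _ => Finset.sum_congr rfl fun e _ => by ring
      map_smul' := fun c u => by
        ext x
        simp only [BoundedContinuousFunction.coe_ofNormedAddCommGroup,
          BoundedContinuousFunction.coe_smul, Lab, smul_eq_mul, RingHom.id_apply, Finset.mul_sum]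
        refine Finset.sum_congr rfl fun i _ => Finset.sum_congr rfl fun e _ => by ring }
    (k * (d * 2) * 2)
    (fun u => BoundedContinuousFunction.norm_ofNormedAddCommGroup_le _ (by positivity)
      (fun x => Lab_bound u ‖u‖ (fun x => u.norm_coe_le_norm x) x))

lemma Lop_apply {d k : ℕ} (u : Bd d k) : ⇑(Lop d k u) = Lab u := rfl

lemma Lop_pow {d k : ℕ} (n : ℕ) (u : Bd d k) : ⇑((Lop d k ^ n) u) = Lab^[n] u := by
  induction n with
  | zero => rfl
  | succ n ih =>
    rw [pow_succ', Function.iterate_succ_apply', ← ih]; rfl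

/-- Discrete skeleton as an operator. -/
def Qop (d k : ℕ) (Λ : ℝ) : Bd d k →L[ℝ] Bd d k := 1 + Λ⁻¹ • Lop d k

lemma Qop_pow {d k : ℕ} (Λ : ℝ) (n : ℕ) (u : Bd d k) :
    ⇑((Qop d k Λ ^ n) u) = (Qs Λ)^[n] u := by
  induction n with
  | zero => rfl
  | succ n ih =>
    rw [pow_succ', Function.iterate_succ_apply', ← ih]
    funext x
    change (((Qop d k Λ ^ n) u) x) + Λ⁻¹ * (Lop d k ((Qop d k Λ ^ n) u) x) = _
    rw [Lop_apply, Qs]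
    ring

lemma exp_apply {E : Type*} [NormedAddCommGroup E] [NormedSpace ℝ E] [CompleteSpace E]
    (A : E →L[ℝ] E) (t : ℝ) (φ : E →L[ℝ] ℝ) (u : E) :
    HasSum (fun n : ℕ => t ^ n / (n.factorial : ℝ) * φ ((A ^ n) u))
      (φ ((NormedSpace.exp (t • A) : E →L[ℝ] E) u)) := by
  have h := NormedSpace.exp_series_hasSum_exp' (𝕂 := ℝ) (t • A)
  have h2 := h.mapL (ContinuousLinearMap.apply ℝ E u)
  have h3 := h2.mapL φ
  have e : (fun n : ℕ => t ^ n / (n.factorial : ℝ) * φ ((A ^ n) u)) =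
      fun n : ℕ => φ (((ContinuousLinearMap.apply ℝ E) u)
        (((n.factorial : ℝ))⁻¹ • (t • A) ^ n)) := by
    funext n
    rw [smul_pow, smul_smul]
    simp only [ContinuousLinearMap.apply_apply, map_smul, smul_eq_mul]
    ring
  rw [e]
  exact h3

lemma exp_unif {E : Type*} [NormedAddCommGroup E] [NormedSpace ℝ E] [CompleteSpace E]
    (A Q : E →L[ℝ] E) (Λ t : ℝ) (hΛ : 0 < Λ) (hQ : Q = 1 + Λ⁻¹ • A) :
    ∃ S : E →L[ℝ] E,
      (∀ (φ : E →L[ℝ] ℝ) u,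
        HasSum (fun n : ℕ => t ^ n / (n.factorial : ℝ) * φ ((A ^ n) u)) (φ (S u))) ∧
      ∀ (φ : E →L[ℝ] ℝ) u, HasSum (fun n : ℕ => Real.exp (-(Λ * t)) *
        ((Λ * t) ^ n / (n.factorial : ℝ) * φ ((Q ^ n) u))) (φ (S u)) := by
  refine ⟨NormedSpace.exp (t • A), fun φ u => exp_apply A t φ u, fun φ u => ?_⟩
  have := (exp_apply Q (Λ * t) φ u).mul_left (Real.exp (-(Λ * t)))
  have e : t • A = (-(Λ * t)) • (1 : E →L[ℝ] E) + (Λ * t) • Q := by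
    rw [hQ, smul_add, smul_smul]
    have : Λ * t * Λ⁻¹ = t := by field_simp
    rw [this, neg_smul]; abel
  have hcomm : Commute ((-(Λ * t)) • (1 : E →L[ℝ] E)) ((Λ * t) • Q) :=
    ((Commute.one_left Q).smul_left _).smul_right _
  have hexp : NormedSpace.exp ((-(Λ * t)) • (1 : E →L[ℝ] E)) =
      Real.exp (-(Λ * t)) • (1 : E →L[ℝ] E) := by
    rw [← Algebra.algebraMap_eq_smul_one, ← NormedSpace.algebraMap_exp_comm,
      Algebra.algebraMap_eq_smul_one, Real.exp_eq_exp_ℝ]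
  letI hQalg : NormedAlgebra ℚ (E →L[ℝ] E) := NormedAlgebra.restrictScalars ℚ ℝ (E →L[ℝ] E)
  rw [e, NormedSpace.exp_add_of_commute hcomm, hexp]
  have e5 : φ (((Real.exp (-(Λ * t)) • (1 : E →L[ℝ] E)) * NormedSpace.exp ((Λ * t) • Q)) u) =
      Real.exp (-(Λ * t)) * φ ((NormedSpace.exp ((Λ * t) • Q) : E →L[ℝ] E) u) := by simp
  rw [e5]
  exact this

lemma semigroup (d k : ℕ) (Λ t : ℝ) (hΛ : 0 < Λ) : ∃ E : Bd d k →L[ℝ] Bd d k,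
    (∀ (u : Bd d k) x,
      HasSum (fun n : ℕ => t ^ n / (n.factorial : ℝ) * (Lab^[n] u) x) (E u x)) ∧
    ∀ (u : Bd d k) x, HasSum (fun n : ℕ => Real.exp (-(Λ * t)) *
      ((Λ * t) ^ n / (n.factorial : ℝ) * ((Qs Λ)^[n] u) x)) (E u x) := by
  obtain ⟨S, h1, h2⟩ := exp_unif (Lop d k) (Qop d k Λ) Λ t hΛ rfl
  refine ⟨S, fun u x => ?_, fun u x => ?_⟩
  · have := h1 (BoundedContinuousFunction.evalCLM ℝ x) u
    simp only [BoundedContinuousFunction.evalCLM_apply] at this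
    simpa only [← Lop_pow] using this
  · have := h2 (BoundedContinuousFunction.evalCLM ℝ x) u
    simp only [BoundedContinuousFunction.evalCLM_apply] at this
    simpa only [← Qop_pow] using this

/-! ### Conclusion -/

/-- Delta function as a bounded function. -/
def dl {d k : ℕ} (z : Conf d k) : Bd d k :=
  BoundedContinuousFunction.ofNormedAddCommGroup (deltaFn z) continuous_of_discreteTopology 1
    (fun x => by unfold deltaFn; split_ifs <;> simp)

lemma dl_apply {d k : ℕ} (z : Conf d k) : ⇑(dl z) = deltaFn z := rfl

lemma tv_core {d k : ℕ} (θ lam Λ M t : ℝ) (hΛ : 0 < Λ) (ht : 0 ≤ t) (h0 : 0 < θ) (h1 : θ < 1)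
    (hM : 0 ≤ M) (x x' : Conf d k) (hx : Function.Injective x) (hx' : Function.Injective x')
    (hb : ∀ u : Conf d k → ℝ, (∀ x, |u x| ≤ 1) → ∀ m : ℕ,
      |(Qs Λ)^[m] u x - (Qs Λ)^[m] u x'| ≤ M * ((m : ℝ) + 1) ^ (-(θ / 2)))
    (T : Finset (Conf d k)) :
    ∑ z ∈ T, |ptl t x z - ptl t x' z| ≤ 3 * M * (1 + Λ * t) ^ (-(θ / 2)) := by
  obtain ⟨E, hE1, hE2⟩ := semigroup d k Λ t hΛ
  have hp : ∀ y : Conf d k, Function.Injective y → ∀ z, ptl t y z = E (dl z) y := by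
    intro y hy z
    have := hE1 (dl z) y
    rw [dl_apply] at this
    unfold ptl
    rw [← this.tsum_eq]
    refine tsum_congr fun n => ?_
    rw [Lexc_iter _ n y hy]
  set σ : Conf d k → ℝ := fun z => (SignType.sign (ptl t x z - ptl t x' z) : ℝ) with hσ
  have hσ1 : ∀ z, |σ z| ≤ 1 := by
    intro z
    simp only [hσ]
    rcases SignType.sign (ptl t x z - ptl t x' z) <;> simp
  set u : Bd d k := ∑ z ∈ T, σ z • dl z with hu
  have hu1 : ∀ y, |u y| ≤ 1 := by
    intro y
    have : u y = if y ∈ T then σ y else 0 := by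
      rw [hu]
      simp [BoundedContinuousFunction.sum_apply, dl_apply, deltaFn]
    rw [this]
    split_ifs
    · exact hσ1 y
    · simp
  have hsum : ∑ z ∈ T, |ptl t x z - ptl t x' z| = E u x - E u x' := by
    have : ∀ y, E u y = ∑ z ∈ T, σ z * E (dl z) y := by
      intro y
      rw [hu, map_sum]
      simp [BoundedContinuousFunction.sum_apply]
    rw [this, this, ← Finset.sum_sub_distrib]
    refine Finset.sum_congr rfl fun z _ => ?_
    rw [← hp x hx, ← hp x' hx', ← mul_sub, hσ]
    exact (sign_mul_self _).symm
  rw [hsum]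
  have hd := (hE2 u x).sub (hE2 u x')
  have hd2 : HasSum (fun n : ℕ => Real.exp (-(Λ * t)) * ((Λ * t) ^ n / (n.factorial : ℝ) *
      ((Qs Λ)^[n] u x - (Qs Λ)^[n] u x'))) (E u x - E u x') := by
    have e : (fun n : ℕ => Real.exp (-(Λ * t)) * ((Λ * t) ^ n / (n.factorial : ℝ) *
      ((Qs Λ)^[n] u x - (Qs Λ)^[n] u x'))) = fun n : ℕ => Real.exp (-(Λ * t)) *
      ((Λ * t) ^ n / (n.factorial : ℝ) * ((Qs Λ)^[n] u) x) - Real.exp (-(Λ * t)) *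
      ((Λ * t) ^ n / (n.factorial : ℝ) * ((Qs Λ)^[n] u) x') := by
      funext n; ring
    rw [e]; exact hd
  exact (le_abs_self _).trans (poisson (Λ * t) (θ / 2) M _ (by positivity) (by linarith)
    (by linarith) hM _ (hb u hu1) hd2)

lemma final_num (θ Λ t : ℝ) (hΛ : 1 ≤ Λ) (ht : 0 ≤ t) (h0 : 0 < θ) (h1 : θ < 1) :
    (1 + Λ * t) ^ (-(θ / 2)) ≤ 2 * (Real.sqrt t + 1) ^ (-θ) := by
  have hs := Real.sq_sqrt ht
  have hs0 := Real.sqrt_nonneg t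
  set r := Real.sqrt t
  have hr : 0 < r + 1 := by linarith
  have h2 : (r + 1) ^ 2 / 2 ≤ 1 + Λ * t := by nlinarith [sq_nonneg (r - 1)]
  have h3 : (1 + Λ * t) ^ (-(θ / 2)) ≤ ((r + 1) ^ 2 / 2) ^ (-(θ / 2)) :=
    Real.rpow_le_rpow_of_nonpos (by positivity) h2 (by linarith)
  have e : ((r + 1) ^ 2) ^ (-(θ / 2)) = (r + 1) ^ (-θ) := by
    rw [← Real.rpow_natCast, ← Real.rpow_mul hr.le]; congr 1; push_cast; ring
  rw [Real.div_rpow (by positivity) (by norm_num), e] at h3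
  refine h3.trans ?_
  rw [div_eq_mul_inv, mul_comm]
  apply mul_le_mul_of_nonneg_right _ (by positivity)
  rw [Real.rpow_neg (by norm_num), inv_inv]
  calc (2 : ℝ) ^ (θ / 2) ≤ (2 : ℝ) ^ (1 : ℝ) :=
        Real.rpow_le_rpow_of_exponent_le (by norm_num) (by linarith)
    _ = 2 := Real.rpow_one 2

lemma main_bound (d k : ℕ) (hd : 2 ≤ d) (θ : ℝ) (h0 : 0 < θ) (h1 : θ < 1) :
    ∃ C : ℝ, 0 < C ∧ ∀ x : Conf d (k + 1), x ∈ SSet d (k + 1) →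
      x + e11 d (k + 1) ∈ SSet d (k + 1) → ∀ t : ℝ, 0 ≤ t → ∀ T : Finset (Conf d (k + 1)),
      ∑ z ∈ T, |ptl t x z - ptl t (x + e11 d (k + 1)) z| ≤ C * (Real.sqrt t + 1) ^ (-θ) := by
  let i0 : Fin d := ⟨0, by omega⟩
  let i1 : Fin d := ⟨1, by omega⟩
  have h01 : i0 ≠ i1 := by simp [i0, i1]
  obtain ⟨lam, K, hl, hK, hQ⟩ := Qs_bdd (k := k) i0 i1 h01 θ h0 h1
  have hΛ := Lam_ge d k
  set M : ℝ := 2 * (lam * (1 + K + 8 * d * k)) with hM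
  have hM0 : 0 < M := by positivity
  refine ⟨6 * M, by positivity, fun x hx hx' t ht T => ?_⟩
  rw [mem_SSet] at hx hx'
  set e : Fin d × Bool := (i0, true) with he
  have hxc : x = Fin.cons (x 0) (Fin.tail x) := (Fin.cons_self_tail x).symm
  have hxc' : x + e11 d (k + 1) = Fin.cons (x 0 + ev e) (Fin.tail x) := by
    funext i
    refine Fin.cases ?_ (fun j => ?_) i
    · funext j
      simp only [Fin.cons_zero, Pi.add_apply, e11, ev, he]
      congr 1
      by_cases hj : j = i0
      · subst hj; simp [i0]
      · have : ¬ (j.val = 0) := fun h => hj (Fin.ext h)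
        simp [hj, this]
    · funext l
      simp [e11, Fin.tail]
  have hv : Valid (x 0, x 0 + ev e, Fin.tail x) := by
    rw [hxc'] at hx'
    rw [hxc] at hx
    rw [Fin.cons_injective_iff] at hx hx'
    exact ⟨hx.2, hx.1, hx'.1⟩
  have hr : x 0 - (x 0 + ev e) = ev (eneg e) := by rw [ev_eneg]; abel
  have hn1 : n1 (ev (eneg e)) = 1 := by
    rw [ev_eneg]; simp only [n1, ev, he, Pi.neg_apply, Int.natAbs_neg]
    rw [Finset.sum_eq_single i0]
    · simp
    · intro j _ hj; simp [hj]
    · simp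
  have hnsq : nsq (ev (eneg e)) = 1 := by
    rw [ev_eneg, nsq_neg]; simp only [nsq, ev, he]
    rw [Finset.sum_eq_single i0]
    · simp
    · intro j _ hj; simp [hj]
    · simp
  have hPhi : Phi (hh d (1 - θ) K) i0 i1 (x 0, x 0 + ev e, Fin.tail x) ≤ 1 + K + 8 * d * k := by
    unfold Phi
    have hh1 : hh d (1 - θ) K 1 = 1 + K := by simp [hh, del]
    have hs : ∑ i, (psiA i0 i1 i (x 0, x 0 + ev e, Fin.tail x) +
        psiB i0 i1 i (x 0, x 0 + ev e, Fin.tail x)) ≤ ∑ _i : Fin k, (2 : ℝ) := by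
      refine Finset.sum_le_sum fun i _ => ?_
      have := psi_le i0 i1 i (x 0, x 0 + ev e, Fin.tail x) (by
        simp only; rw [hr, hnsq])
      linarith [this.1, this.2]
    simp only [Finset.sum_const, Finset.card_univ, Fintype.card_fin, nsmul_eq_mul] at hs
    have h4 := mul_le_mul_of_nonneg_left hs (by positivity : (0 : ℝ) ≤ 4 * d)
    simp only [hr, hn1, hh1]
    linarith
  have hb : ∀ u : Conf d (k + 1) → ℝ, (∀ x, |u x| ≤ 1) → ∀ m : ℕ,
      |(Qs (Lam d k))^[m] u x - (Qs (Lam d k))^[m] u (x + e11 d (k + 1))| ≤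
        M * ((m : ℝ) + 1) ^ (-(θ / 2)) := by
    intro u hu m
    have := hQ u hu m (x 0, x 0 + ev e, Fin.tail x) hv
    simp only at this
    rw [← hxc, ← hxc'] at this
    refine this.trans ?_
    have h5 : 0 ≤ ((m : ℝ) + 1) ^ (-(θ / 2)) := by positivity
    calc _ ≤ 2 * (lam * Phi (hh d (1 - θ) K) i0 i1 (x 0, x 0 + ev e, Fin.tail x) *
          ((m : ℝ) + 1) ^ (-(θ / 2))) := by
          apply mul_le_mul_of_nonneg_left (min_le_right _ _) (by norm_num)
      _ ≤ 2 * (lam * (1 + K + 8 * d * k) * ((m : ℝ) + 1) ^ (-(θ / 2))) := by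
          apply mul_le_mul_of_nonneg_left _ (by norm_num)
          apply mul_le_mul_of_nonneg_right _ h5
          exact mul_le_mul_of_nonneg_left hPhi (by linarith)
      _ = _ := by rw [hM]; ring
  have h6 := tv_core θ lam (Lam d k) M t (by linarith) ht h0 h1 hM0.le x _ hx hx' hb T
  have h7 := mul_le_mul_of_nonneg_left (final_num θ (Lam d k) t hΛ ht h0 h1)
    (by positivity : 0 ≤ 3 * M)
  linarith


/-- Theorem (total variation gradient bound): for integers `d ≥ 2`, `k ≥ 1` and `θ ∈ (0,1)`
there is a constant `C = C(θ,k,d)` such that for all `x ∈ 𝕊^k` with `x + e₁₁ ∈ 𝕊^k` and all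
`t ≥ 0`, `Σ_{z ∈ 𝕊^k} |p_t^ℓ(x,z) − p_t^ℓ(x+e₁₁,z)| ≤ C (√t + 1)^{−θ}`. -/
theorem total_variation_gradient_bound (d k : ℕ) (hd : 2 ≤ d) (hk : 1 ≤ k)
    (θ : ℝ) (hθ : θ ∈ Set.Ioo (0 : ℝ) 1) :
    ∃ C : ℝ, 0 < C ∧ ∀ x : Conf d k, x ∈ SSet d k → x + e11 d k ∈ SSet d k →
      ∀ t : ℝ, 0 ≤ t →
      Summable (fun z : SSet d k => |ptl t x z.val - ptl t (x + e11 d k) z.val|) ∧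
      ∑' z : SSet d k, |ptl t x z.val - ptl t (x + e11 d k) z.val| ≤
        C * (Real.sqrt t + 1) ^ (-θ) := by
  obtain ⟨k, rfl⟩ : ∃ k', k = k' + 1 := ⟨k - 1, by omega⟩
  obtain ⟨C, hC, hb⟩ := main_bound d k hd θ hθ.1 hθ.2
  refine ⟨C, hC, fun x hx hx' t ht => ?_⟩
  have hT : ∀ T : Finset (SSet d (k + 1)),
      ∑ z ∈ T, |ptl t x z.val - ptl t (x + e11 d (k + 1)) z.val| ≤
        C * (Real.sqrt t + 1) ^ (-θ) := by
    intro T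
    have := hb x hx hx' t ht (T.map (Function.Embedding.subtype _))
    rw [Finset.sum_map] at this
    exact this
  exact ⟨summable_of_sum_le (fun _ => abs_nonneg _) hT,
    Real.tsum_le_of_sum_le (fun _ => abs_nonneg _) hT⟩

end SSEPPaper
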